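/- Let D′ ⋐ D ⊂ ℝ^{2n+1} be bounded open sets, let s ≥ 2n + 3 be an integer, and let C₀ > 0. Then there exists a constant C > 0 such that for all smooth functions f, f′ : cl(D) → ℝ satisfying f(x) ≥ 1/C₀ and f′(x) ≥ 1/C₀ for all x ∈ cl(D′), one has ‖1/f − 1/f′‖_{D′,s} ≤ C (1 + ‖f‖_{D,s})^s (1 + ‖f′‖_{D,s})^s ‖f − f′‖_{D,s}. -/

import Mathlib

open MeasureTheory Bornology

noncomputable section

variable {E : Type*} [NormedAddCommGroup E] [NormedSpace ℝ E]

/-- The standard contact form `η₀ = dx^{2n+1} - Σ x^{n+j} dx^j` on `ℝ^{2n+1}`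
(0-indexed coordinates): `η₀(x)(v) = v_{2n} - Σ_{j<n} x_{n+j} v_j`. -/
def eta0 (n : ℕ) (x v : Fin (2*n+1) → ℝ) : ℝ :=
  v ⟨2*n, by omega⟩ -
    ∑ j : Fin n, x ⟨n + j, by have := j.2; omega⟩ * v ⟨j, by have := j.2; omega⟩

/-- `dη₀ = Σ_{j<n} dx^j ∧ dx^{n+j}`. -/
def dEta0 (n : ℕ) (u v : Fin (2*n+1) → ℝ) : ℝ :=
  ∑ j : Fin n,
    (u ⟨j, by have := j.2; omega⟩ * v ⟨n + j, by have := j.2; omega⟩ -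
     u ⟨n + j, by have := j.2; omega⟩ * v ⟨j, by have := j.2; omega⟩)

/-- The horizontal vector fields: for `j < n`, `X_j = ∂_j + x_{n+j} ∂_{2n}`;
for `n ≤ j < 2n`, `X_j = ∂_j` (0-indexed). -/
def Xvec (n : ℕ) (j : Fin (2*n)) (x : Fin (2*n+1) → ℝ) : Fin (2*n+1) → ℝ :=
  if h : (j : ℕ) < n then
    (Pi.single (⟨j, by omega⟩ : Fin (2*n+1)) 1 : Fin (2*n+1) → ℝ)
      + x ⟨n + j, by omega⟩ • (Pi.single (⟨2*n, by omega⟩ : Fin (2*n+1)) 1 : Fin (2*n+1) → ℝ)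
  else
    (Pi.single (⟨j, by have := j.2; omega⟩ : Fin (2*n+1)) 1 : Fin (2*n+1) → ℝ)

/-- The horizontal derivative `X_j f`. -/
def hDeriv (n : ℕ) (j : Fin (2*n)) (f : (Fin (2*n+1) → ℝ) → E)
    (x : Fin (2*n+1) → ℝ) : E :=
  fderiv ℝ f x (Xvec n j x)

/-- Iterated horizontal derivative `X_I f = X_{i₁} ⋯ X_{i_t} f`. -/
def XI (n : ℕ) : List (Fin (2*n)) → ((Fin (2*n+1) → ℝ) → E) → ((Fin (2*n+1) → ℝ) → E)
  | [], f => f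
  | j :: I, f => hDeriv n j (XI n I f)

/-- Squared Folland–Stein norm `‖f‖_{D,s}² = Σ_{|I| ≤ s} ∫_D ‖X_I f‖²`. -/
def fsNormSq (n : ℕ) (D : Set (Fin (2*n+1) → ℝ)) (s : ℕ)
    (f : (Fin (2*n+1) → ℝ) → E) : ℝ :=
  ∑ t ∈ Finset.range (s+1), ∑ I : Fin t → Fin (2*n),
    ∫ x in D, ‖XI n (List.ofFn I) f x‖^2

/-- The Folland–Stein norm `‖f‖_{D,s}`. -/
def fsNorm (n : ℕ) (D : Set (Fin (2*n+1) → ℝ)) (s : ℕ)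
    (f : (Fin (2*n+1) → ℝ) → E) : ℝ :=
  Real.sqrt (fsNormSq n D s f)

/-- Ordinary partial derivative `∂_i f`. -/
def pDeriv (n : ℕ) (i : Fin (2*n+1)) (f : (Fin (2*n+1) → ℝ) → E)
    (x : Fin (2*n+1) → ℝ) : E :=
  fderiv ℝ f x (Pi.single i 1 : Fin (2*n+1) → ℝ)

/-- Iterated ordinary partial derivative. -/
def pI (n : ℕ) : List (Fin (2*n+1)) → ((Fin (2*n+1) → ℝ) → E) → ((Fin (2*n+1) → ℝ) → E)
  | [], f => f
  | i :: I, f => pDeriv n i (pI n I f)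

/-- The Reeb derivative `T₀ f = ∂_{2n} f` (0-indexed). -/
def T0Deriv (n : ℕ) (f : (Fin (2*n+1) → ℝ) → E) (x : Fin (2*n+1) → ℝ) : E :=
  fderiv ℝ f x (Pi.single (⟨2*n, by omega⟩ : Fin (2*n+1)) 1 : Fin (2*n+1) → ℝ)

/-- `X` is a contact vector field on `D`:  `dη₀(X, X_j) + X_j(η₀(X)) = 0` for all
horizontal `X_j`. -/
def IsContactVF (n : ℕ) (D : Set (Fin (2*n+1) → ℝ))
    (X : (Fin (2*n+1) → ℝ) → (Fin (2*n+1) → ℝ)) : Prop :=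
  ∀ j : Fin (2*n), ∀ x ∈ D,
    dEta0 n (X x) (Xvec n j x) + hDeriv n j (fun y => eta0 n y (X y)) x = 0

/-- The contact vector field with generating function `g`:
`X_g = g T₀ + Σ_j (-(X_{n+j} g) X_j + (X_j g) X_{n+j})`. -/
def genVF (n : ℕ) (g : (Fin (2*n+1) → ℝ) → ℝ) (x : Fin (2*n+1) → ℝ) :
    Fin (2*n+1) → ℝ :=
  g x • (Pi.single (⟨2*n, by omega⟩ : Fin (2*n+1)) 1 : Fin (2*n+1) → ℝ)
  + ∑ j : Fin n,
      (-(hDeriv n (⟨n + j, by have := j.2; omega⟩ : Fin (2*n)) g x) •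
          Xvec n (⟨j, by have := j.2; omega⟩ : Fin (2*n)) x
        + (hDeriv n (⟨j, by have := j.2; omega⟩ : Fin (2*n)) g x) •
          Xvec n (⟨n + j, by have := j.2; omega⟩ : Fin (2*n)) x)

/-!
Write `1/f - 1/f' = (1/f) (f' - f) (1/f')`. In the Leibniz expansion of `X_I` of a product of
smooth functions with `|I| ≤ s`, at most one factor carries more than `s / 2` derivatives. That
factor is put in `L²` and the others in `L^∞`, where derivatives of order at most `s / 2` are
controlled by the Folland–Stein norm on a larger domain because `s ≥ 2 n + 3`. The derivatives of
`1/f` are estimated by induction on `|I|`: from `X_I (f · 1/f) = 0` one gets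
`X_I (1/f) = -(1/f) [X_I, f] (1/f)`, where the commutator only involves lower derivatives of `1/f`.
Each of the `s` inductive steps costs one factor `1 + ‖f‖`.

The Sobolev inequality `|u(p)| ≤ C ‖u‖_{n + 2}` follows from the averages
`A(r) = ∫ φ(z) u(p · δ_r z) dz` over dilated left translates, for which `A(0) = u(p)` and
`|A(r)| ≤ C r^{-(n + 1)} ‖u‖_{L²}`. The derivative `A'(r)` is a sum of such averages of the `X_j u`,
plus `r` times an average of the Reeb derivative of `u`, which is a commutator of horizontal
derivatives; there the factor `r` absorbs an integration by parts against `X_i`. Hence each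
horizontal derivative gains one power of `r`, and after `n + 2` of them `A` stays bounded as
`r → 0`.
-/
open Filter (Tendsto EventuallyEq)
open Set (Icc Ioc)
open scoped ContDiff ENNReal NNReal Topology

/-! ### Horizontal calculus -/

/-- The space `ℝ^{2n+1}` underlying the Heisenberg group. -/
abbrev Heis (n : ℕ) : Type := Fin (2 * n + 1) → ℝ

section Calculus

variable {n : ℕ} {f g : Heis n → E} {x : Heis n}

theorem contDiff_Xvec (j : Fin (2 * n)) : ContDiff ℝ ∞ (Xvec n j) := by
  unfold Xvec
  split_ifs <;> fun_prop

theorem contDiffAt_hDeriv (hf : ContDiffAt ℝ ∞ f x) (j : Fin (2 * n)) :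
    ContDiffAt ℝ ∞ (hDeriv n j f) x :=
  (hf.fderiv_right (by simp)).clm_apply (contDiff_Xvec j).contDiffAt

theorem contDiffAt_XI (hf : ContDiffAt ℝ ∞ f x) :
    ∀ I : List (Fin (2 * n)), ContDiffAt ℝ ∞ (XI n I f) x
  | [] => hf
  | j :: I => contDiffAt_hDeriv (contDiffAt_XI hf I) j

theorem eventually_differentiableAt_of_contDiffAt (hf : ContDiffAt ℝ ∞ f x) :
    ∀ᶠ y in 𝓝 x, DifferentiableAt ℝ f y :=
  ((hf.of_le (m := 1) (mod_cast le_top)).eventually (by simp)).mono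
    fun _ hy => hy.differentiableAt one_ne_zero

theorem continuousOn_of_contDiffAt {K : Set (Heis n)} (hf : ∀ x ∈ K, ContDiffAt ℝ ∞ f x) :
    ContinuousOn f K :=
  fun x hx => (hf x hx).continuousAt.continuousWithinAt

theorem XI_append (J : List (Fin (2 * n))) (f : Heis n → E) :
    ∀ I : List (Fin (2 * n)), XI n (I ++ J) f = XI n I (XI n J f)
  | [] => rfl
  | j :: I => congrArg (hDeriv n j) (XI_append J f I)

theorem hDeriv_congr (j : Fin (2 * n)) (h : f =ᶠ[𝓝 x] g) :
    hDeriv n j f =ᶠ[𝓝 x] hDeriv n j g :=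
  h.fderiv.mono fun y hy => congrArg (fun A : Heis n →L[ℝ] E => A (Xvec n j y)) hy

theorem XI_congr (h : f =ᶠ[𝓝 x] g) :
    ∀ I : List (Fin (2 * n)), XI n I f =ᶠ[𝓝 x] XI n I g
  | [] => h
  | j :: I => hDeriv_congr j (XI_congr h I)

theorem XI_const {I : List (Fin (2 * n))} (hI : I ≠ []) (c : E) :
    XI n I (fun _ => c) = 0 := by
  induction I with
  | nil => exact absurd rfl hI
  | cons j I ih =>
    rcases I with - | ⟨i, I⟩
    · ext x; simp [XI, hDeriv]
    · rw [XI, ih (by simp)]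
      ext x; simp [hDeriv]

theorem hDeriv_add (hf : ContDiffAt ℝ ∞ f x) (hg : ContDiffAt ℝ ∞ g x) (j : Fin (2 * n)) :
    hDeriv n j (f + g) =ᶠ[𝓝 x] hDeriv n j f + hDeriv n j g := by
  filter_upwards [eventually_differentiableAt_of_contDiffAt hf,
    eventually_differentiableAt_of_contDiffAt hg] with y hfy hgy
  simp [hDeriv, fderiv_add hfy hgy]

theorem XI_add (hf : ContDiffAt ℝ ∞ f x) (hg : ContDiffAt ℝ ∞ g x) :
    ∀ I : List (Fin (2 * n)), XI n I (f + g) =ᶠ[𝓝 x] XI n I f + XI n I g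
  | [] => EventuallyEq.rfl
  | j :: I => (hDeriv_congr j (XI_add hf hg I)).trans
      (hDeriv_add (contDiffAt_XI hf I) (contDiffAt_XI hg I) j)

theorem hDeriv_mul {A : Type*} [NormedRing A] [NormedAlgebra ℝ A] {u v : Heis n → A}
    (hu : ContDiffAt ℝ ∞ u x) (hv : ContDiffAt ℝ ∞ v x) (j : Fin (2 * n)) :
    hDeriv n j (u * v) =ᶠ[𝓝 x] hDeriv n j u * v + u * hDeriv n j v := by
  filter_upwards [eventually_differentiableAt_of_contDiffAt hu,
    eventually_differentiableAt_of_contDiffAt hv] with y huy hvy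
  simp [hDeriv, fderiv_mul' huy hvy, add_comm]

end Calculus

/-! ### Moser estimates for products and inverses -/

/-- The Folland–Stein norm `sup_{|I| ≤ m} ‖X_I f‖_{L^p(μ)}` of order `m`. It takes values in
`[0, ∞]`, so that no integrability has to be assumed. -/
def eSobolevNorm (n m : ℕ) (f : Heis n → E) (p : ℝ≥0∞) (μ : Measure (Heis n)) : ℝ≥0∞ :=
  ⨆ (I : List (Fin (2 * n))) (_ : I.length ≤ m), eLpNorm (XI n I f) p μ

/-- The pairs `(m, p)` such that derivatives of order `m` are measured in `L^p` when working at
regularity `s`: all orders up to `s` in `L²`, and orders up to `s / 2` also in `L^∞`. -/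
def IsMoserPair (s m : ℕ) (p : ℝ≥0∞) : Prop :=
  p = 2 ∧ m ≤ s ∨ p = ⊤ ∧ 2 * m ≤ s

/-- The Moser norm of order `t` at regularity `s`: the supremum of `‖X_I f‖_{L^p(μ)}` over
`|I| ≤ t` and `(|I|, p)` a Moser pair. -/
def eMoserNorm (n s t : ℕ) (f : Heis n → E) (μ : Measure (Heis n)) : ℝ≥0∞ :=
  ⨆ (I : List (Fin (2 * n))) (p : ℝ≥0∞) (_ : I.length ≤ t) (_ : IsMoserPair s I.length p),
    eLpNorm (XI n I f) p μ

section Norms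

variable {n m k s t : ℕ} {p : ℝ≥0∞} {f : Heis n → E} {μ ν : Measure (Heis n)}
  {I : List (Fin (2 * n))} {K : Set (Heis n)}

theorem eLpNorm_XI_le_eSobolevNorm (hI : I.length ≤ m) :
    eLpNorm (XI n I f) p μ ≤ eSobolevNorm n m f p μ :=
  le_iSup₂ (f := fun (I : List (Fin (2 * n))) (_ : I.length ≤ m) => eLpNorm (XI n I f) p μ) I hI

theorem eSobolevNorm_le_iff {c : ℝ≥0∞} :
    eSobolevNorm n m f p μ ≤ c ↔
      ∀ I : List (Fin (2 * n)), I.length ≤ m → eLpNorm (XI n I f) p μ ≤ c :=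
  iSup₂_le_iff

theorem eSobolevNorm_XI_le (I : List (Fin (2 * n))) (h : m + I.length ≤ k) :
    eSobolevNorm n m (XI n I f) p μ ≤ eSobolevNorm n k f p μ := by
  refine eSobolevNorm_le_iff.2 fun J hJ => ?_
  rw [← XI_append]
  exact eLpNorm_XI_le_eSobolevNorm (by grind)

theorem eSobolevNorm_mono_measure (h : μ ≤ ν) :
    eSobolevNorm n m f p μ ≤ eSobolevNorm n m f p ν :=
  iSup₂_mono fun _ _ => eLpNorm_mono_measure _ h

theorem eSobolevNorm_congr {g : Heis n → E} (hK : MeasurableSet K)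
    (h : ∀ x ∈ K, f =ᶠ[𝓝 x] g) :
    eSobolevNorm n m f p (μ.restrict K) = eSobolevNorm n m g p (μ.restrict K) :=
  iSup_congr fun I => iSup_congr fun _ => eLpNorm_congr_ae <|
    (ae_restrict_mem hK).mono fun x hx => (XI_congr (h x hx) I).self_of_nhds

theorem IsMoserPair.mono (hp : IsMoserPair s k p) (hm : m ≤ k) : IsMoserPair s m p := by
  unfold IsMoserPair at *
  grind

theorem IsMoserPair.le (hp : IsMoserPair s k p) : k ≤ s := by
  unfold IsMoserPair at hp
  grind

theorem IsMoserPair.add (hp : IsMoserPair s (m + k) p) :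
    IsMoserPair s m p ∧ IsMoserPair s k ⊤ ∨ IsMoserPair s m ⊤ ∧ IsMoserPair s k p := by
  unfold IsMoserPair at *
  grind

theorem eLpNorm_XI_le_eMoserNorm (hI : I.length ≤ t) (hp : IsMoserPair s I.length p) :
    eLpNorm (XI n I f) p μ ≤ eMoserNorm n s t f μ :=
  le_iSup₂_of_le I p <| le_iSup₂_of_le hI hp le_rfl

theorem eMoserNorm_le_iff {c : ℝ≥0∞} :
    eMoserNorm n s t f μ ≤ c ↔ ∀ (I : List (Fin (2 * n))) (p : ℝ≥0∞), I.length ≤ t →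
      IsMoserPair s I.length p → eLpNorm (XI n I f) p μ ≤ c := by
  simp only [eMoserNorm, iSup_le_iff]

theorem eMoserNorm_mono (h : t ≤ k) : eMoserNorm n s t f μ ≤ eMoserNorm n s k f μ :=
  eMoserNorm_le_iff.2 fun _ _ hI hp => eLpNorm_XI_le_eMoserNorm (hI.trans h) hp

theorem eSobolevNorm_two_le_eMoserNorm :
    eSobolevNorm n s f 2 μ ≤ eMoserNorm n s s f μ :=
  eSobolevNorm_le_iff.2 fun _ hI => eLpNorm_XI_le_eMoserNorm hI (.inl ⟨rfl, hI⟩)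

theorem aestronglyMeasurable_of_contDiffAt (hK : MeasurableSet K)
    (hf : ∀ x ∈ K, ContDiffAt ℝ ∞ f x) : AEStronglyMeasurable f (μ.restrict K) :=
  (continuousOn_of_contDiffAt hf).aestronglyMeasurable hK

end Norms

section Moser

variable {n s t : ℕ} {p : ℝ≥0∞} {μ : Measure (Heis n)} {K : Set (Heis n)}

section Product

variable {A : Type*} [NormedRing A] [NormedAlgebra ℝ A] {u v : Heis n → A} {a b : ℕ}

theorem eLpNorm_XI_mul_XI_le (hK : MeasurableSet K) (hu : ∀ x ∈ K, ContDiffAt ℝ ∞ u x)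
    (hv : ∀ x ∈ K, ContDiffAt ℝ ∞ v x) {J L : List (Fin (2 * n))} (hJ : J.length ≤ a)
    (hL : L.length ≤ b) (hp : IsMoserPair s (J.length + L.length) p) :
    eLpNorm (XI n J u * XI n L v) p (μ.restrict K) ≤
      eMoserNorm n s a u (μ.restrict K) * eMoserNorm n s b v (μ.restrict K) := by
  have hum := aestronglyMeasurable_of_contDiffAt (μ := μ) hK
    fun x hx => contDiffAt_XI (hu x hx) J
  have hvm := aestronglyMeasurable_of_contDiffAt (μ := μ) hK
    fun x hx => contDiffAt_XI (hv x hx) L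
  rcases hp.add with ⟨hpJ, hpL⟩ | ⟨hpJ, hpL⟩
  · calc _ ≤ eLpNorm (XI n J u) p _ * eLpNorm (XI n L v) ⊤ _ :=
          eLpNorm_smul_le_eLpNorm_mul_eLpNorm_top p (XI n L v) hum
      _ ≤ _ := mul_le_mul' (eLpNorm_XI_le_eMoserNorm hJ hpJ) (eLpNorm_XI_le_eMoserNorm hL hpL)
  · calc _ ≤ eLpNorm (XI n J u) ⊤ _ * eLpNorm (XI n L v) p _ :=
          eLpNorm_smul_le_eLpNorm_top_mul_eLpNorm p hvm (XI n J u)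
      _ ≤ _ := mul_le_mul' (eLpNorm_XI_le_eMoserNorm hJ hpJ) (eLpNorm_XI_le_eMoserNorm hL hpL)

theorem XI_concat_mul {x : Heis n} (hu : ContDiffAt ℝ ∞ u x) (hv : ContDiffAt ℝ ∞ v x)
    (I : List (Fin (2 * n))) (j : Fin (2 * n)) :
    XI n (I ++ [j]) (u * v) =ᶠ[𝓝 x] XI n I (hDeriv n j u * v) + XI n I (u * hDeriv n j v) := by
  rw [XI_append]
  exact (XI_congr (hDeriv_mul hu hv j) I).trans <|
    XI_add ((contDiffAt_hDeriv hu j).mul hv) (hu.mul (contDiffAt_hDeriv hv j)) I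

theorem one_le_of_isMoserPair {m : ℕ} (hp : IsMoserPair s m p) : 1 ≤ p := by
  rcases hp with ⟨rfl, -⟩ | ⟨rfl, -⟩ <;> simp

/-- The induction peels off the innermost field of `X_I`, the one hitting the product first, so
that only the Leibniz rule for a single field is needed. -/
theorem eLpNorm_XI_mul_le (hK : MeasurableSet K) (hu : ∀ x ∈ K, ContDiffAt ℝ ∞ u x)
    (hv : ∀ x ∈ K, ContDiffAt ℝ ∞ v x) (I J L : List (Fin (2 * n)))
    (hJ : I.length + J.length ≤ a) (hL : I.length + L.length ≤ b)
    (hp : IsMoserPair s (I.length + J.length + L.length) p) :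
    eLpNorm (XI n I (XI n J u * XI n L v)) p (μ.restrict K) ≤
      2 ^ I.length * (eMoserNorm n s a u (μ.restrict K) * eMoserNorm n s b v (μ.restrict K)) := by
  induction I using List.reverseRecOn generalizing J L with
  | nil => simpa [XI] using eLpNorm_XI_mul_XI_le hK hu hv (by grind) (by grind) (by simpa using hp)
  | append_singleton I j ih =>
    simp only [List.length_append, List.length_singleton] at hJ hL hp ⊢
    have huJ := fun J x hx => contDiffAt_XI (hu x hx) J
    have hvL := fun L x hx => contDiffAt_XI (hv x hx) L
    have hsplit : XI n (I ++ [j]) (XI n J u * XI n L v) =ᵐ[μ.restrict K]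
        XI n I (XI n (j :: J) u * XI n L v) + XI n I (XI n J u * XI n (j :: L) v) :=
      (ae_restrict_mem hK).mono fun x hx =>
        (XI_concat_mul (huJ J x hx) (hvL L x hx) I j).self_of_nhds
    have hmeas : ∀ J L, AEStronglyMeasurable (XI n I (XI n J u * XI n L v)) (μ.restrict K) :=
      fun J L => aestronglyMeasurable_of_contDiffAt hK
        fun x hx => contDiffAt_XI ((huJ J x hx).mul (hvL L x hx)) I
    rw [eLpNorm_congr_ae hsplit, pow_succ, mul_two, add_mul]
    exact (eLpNorm_add_le (hmeas _ _) (hmeas _ _) (one_le_of_isMoserPair hp)).trans <|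
      add_le_add (ih _ _ (by grind) (by grind) (hp.mono (by grind)))
        (ih _ _ (by grind) (by grind) (hp.mono (by grind)))

theorem eMoserNorm_mul_le (hK : MeasurableSet K) (hu : ∀ x ∈ K, ContDiffAt ℝ ∞ u x)
    (hv : ∀ x ∈ K, ContDiffAt ℝ ∞ v x) :
    eMoserNorm n s t (u * v) (μ.restrict K) ≤
      2 ^ t * (eMoserNorm n s t u (μ.restrict K) * eMoserNorm n s t v (μ.restrict K)) := by
  refine eMoserNorm_le_iff.2 fun I p hI hp => ?_
  have h := eLpNorm_XI_mul_le (μ := μ) (a := t) (b := t) hK hu hv I [] [] (by simpa) (by simpa)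
    (by simpa)
  refine h.trans ?_
  gcongr
  exact one_le_two

theorem eLpNorm_XI_mul_sub_mul_XI_le (hK : MeasurableSet K) (hu : ∀ x ∈ K, ContDiffAt ℝ ∞ u x)
    (hv : ∀ x ∈ K, ContDiffAt ℝ ∞ v x) (I L : List (Fin (2 * n)))
    (hIL : I.length + L.length ≤ t + 1) (hp : IsMoserPair s (I.length + L.length) p) :
    eLpNorm (XI n I (u * XI n L v) - u * XI n (I ++ L) v) p (μ.restrict K) ≤
      2 ^ I.length *
        (eMoserNorm n s (t + 1) u (μ.restrict K) * eMoserNorm n s t v (μ.restrict K)) := by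
  induction I using List.reverseRecOn generalizing L with
  | nil => simp [XI]
  | append_singleton I j ih =>
    simp only [List.length_append, List.length_singleton] at hIL hp ⊢
    have hvL := fun L x hx => contDiffAt_XI (hv x hx) L
    have hsplit : XI n (I ++ [j]) (u * XI n L v) - u * XI n (I ++ [j] ++ L) v =ᵐ[μ.restrict K]
        XI n I (XI n [j] u * XI n L v) +
          (XI n I (u * XI n (j :: L) v) - u * XI n (I ++ j :: L) v) :=
      (ae_restrict_mem hK).mono fun x hx => by
        have h := (XI_concat_mul (hu x hx) (hvL L x hx) I j).self_of_nhds
        simp only [Pi.sub_apply, Pi.add_apply, h, List.append_assoc, List.singleton_append,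
          add_sub_assoc, XI]
    have hmeas₁ : AEStronglyMeasurable (XI n I (XI n [j] u * XI n L v)) (μ.restrict K) :=
      aestronglyMeasurable_of_contDiffAt hK fun x hx =>
        contDiffAt_XI ((contDiffAt_XI (hu x hx) [j]).mul (hvL L x hx)) I
    have hmeas₂ : AEStronglyMeasurable
        (XI n I (u * XI n (j :: L) v) - u * XI n (I ++ j :: L) v) (μ.restrict K) :=
      aestronglyMeasurable_of_contDiffAt hK fun x hx =>
        (contDiffAt_XI ((hu x hx).mul (hvL _ x hx)) I).sub ((hu x hx).mul (hvL _ x hx))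
    rw [eLpNorm_congr_ae hsplit, pow_succ, mul_two, add_mul]
    exact (eLpNorm_add_le hmeas₁ hmeas₂ (one_le_of_isMoserPair hp)).trans <| add_le_add
      (eLpNorm_XI_mul_le hK hu hv I [j] L (by grind) (by grind) (hp.mono (by grind)))
      (ih _ (by grind) (hp.mono (by grind)))

end Product

section Inverse

variable {𝕜 : Type*} [NormedField 𝕜] [NormedAlgebra ℝ 𝕜] {u : Heis n → 𝕜} {C : ℝ≥0}

/-- Since `X_I (u u⁻¹) = 0`, the derivative `X_I u⁻¹` is `u⁻¹` times a commutator. -/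
theorem eLpNorm_XI_inv_le (hK : MeasurableSet K) (hu : ∀ x ∈ K, ContDiffAt ℝ ∞ u x)
    (hu0 : ∀ x ∈ K, u x ≠ 0) (hC : ∀ x ∈ K, ‖(u x)⁻¹‖ₑ ≤ C) {I : List (Fin (2 * n))}
    (hI : I.length = t + 1) (hp : IsMoserPair s I.length p) :
    eLpNorm (XI n I u⁻¹) p (μ.restrict K) ≤
      C * (2 ^ s * (eMoserNorm n s (t + 1) u (μ.restrict K) *
        eMoserNorm n s t u⁻¹ (μ.restrict K))) := by
  have hv : ∀ x ∈ K, ContDiffAt ℝ ∞ u⁻¹ x := fun x hx => (hu x hx).inv (hu0 x hx)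
  have hone : ∀ x ∈ K, XI n I (u * u⁻¹) x = 0 := fun x hx => by
    have h : u * u⁻¹ =ᶠ[𝓝 x] fun _ => 1 :=
      ((hu x hx).continuousAt.eventually_ne (hu0 x hx)).mono fun y hy => mul_inv_cancel₀ hy
    rw [(XI_congr h I).self_of_nhds, XI_const (by rintro rfl; simp at hI), Pi.zero_apply]
  have hbound : ∀ᵐ x ∂μ.restrict K,
      ‖XI n I u⁻¹ x‖ₑ ≤ C * ‖(XI n I (u * u⁻¹) - u * XI n I u⁻¹) x‖ₑ :=
    (ae_restrict_mem hK).mono fun x hx => by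
      have h : XI n I u⁻¹ x = (u x)⁻¹ * (u x * XI n I u⁻¹ x) :=
        (inv_mul_cancel_left₀ (hu0 x hx) _).symm
      rw [h, Pi.sub_apply, hone x hx, zero_sub, enorm_neg, enorm_mul]
      exact mul_le_mul' (hC x hx) le_rfl
  have hcomm := eLpNorm_XI_mul_sub_mul_XI_le (μ := μ) (t := t) hK hu hv I [] (by simp [hI])
    (by simpa using hp)
  rw [List.append_nil] at hcomm
  calc eLpNorm (XI n I u⁻¹) p (μ.restrict K)
      ≤ C * eLpNorm (XI n I (u * u⁻¹) - u * XI n I u⁻¹) p (μ.restrict K) :=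
        eLpNorm_le_mul_eLpNorm_of_ae_le_mul' hbound p
    _ ≤ C * (2 ^ I.length * _) := by gcongr; exact hcomm
    _ ≤ _ := by gcongr; exacts [one_le_two, hp.le]

theorem eMoserNorm_inv_zero_le (hK : MeasurableSet K) (hC : ∀ x ∈ K, ‖(u x)⁻¹‖ₑ ≤ C) :
    eMoserNorm n s 0 u⁻¹ (μ.restrict K) ≤ C * (1 + μ K) := by
  refine eMoserNorm_le_iff.2 fun I p hI hp => ?_
  obtain rfl := List.length_eq_zero_iff.1 (Nat.le_zero.1 hI)
  have hpow : μ K ^ p.toReal⁻¹ ≤ 1 + μ K := by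
    have hexp : 0 ≤ p.toReal⁻¹ ∧ p.toReal⁻¹ ≤ 1 := by
      rcases hp with ⟨rfl, -⟩ | ⟨rfl, -⟩ <;> norm_num
    calc μ K ^ p.toReal⁻¹ ≤ (1 + μ K) ^ p.toReal⁻¹ :=
          ENNReal.rpow_le_rpow le_add_self hexp.1
      _ ≤ (1 + μ K) ^ (1 : ℝ) :=
          ENNReal.rpow_le_rpow_of_exponent_le le_self_add hexp.2
      _ = 1 + μ K := ENNReal.rpow_one _
  have h := eLpNorm_le_of_ae_enorm_bound (p := p)
    ((ae_restrict_mem (μ := μ) hK).mono fun x hx => hC x hx)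
  rw [Measure.restrict_apply_univ, smul_eq_mul] at h
  exact h.trans (by gcongr)

theorem eMoserNorm_inv_le (hK : MeasurableSet K) (hu : ∀ x ∈ K, ContDiffAt ℝ ∞ u x)
    (hu0 : ∀ x ∈ K, u x ≠ 0) (hC : ∀ x ∈ K, ‖(u x)⁻¹‖ₑ ≤ C) (ht : t ≤ s) :
    eMoserNorm n s t u⁻¹ (μ.restrict K) ≤
      (1 + C * 2 ^ s * eMoserNorm n s s u (μ.restrict K)) ^ t * (C * (1 + μ K)) := by
  induction t with
  | zero => simpa using eMoserNorm_inv_zero_le hK hC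
  | succ t ih =>
    set N := eMoserNorm n s s u (μ.restrict K)
    have hstep : eMoserNorm n s (t + 1) u⁻¹ (μ.restrict K) ≤
        (1 + C * 2 ^ s * N) * eMoserNorm n s t u⁻¹ (μ.restrict K) := by
      refine eMoserNorm_le_iff.2 fun I p hI hp => ?_
      rw [add_mul, one_mul]
      rcases Nat.le_succ_iff.1 hI with hlt | heq
      · exact (eLpNorm_XI_le_eMoserNorm hlt hp).trans le_self_add
      · refine (eLpNorm_XI_inv_le hK hu hu0 hC heq hp).trans (le_trans ?_ le_add_self)
        rw [← mul_assoc, ← mul_assoc]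
        gcongr
        exact eMoserNorm_mono ht
    calc _ ≤ _ := hstep
      _ ≤ (1 + C * 2 ^ s * N) * ((1 + C * 2 ^ s * N) ^ t * (C * (1 + μ K))) := by
        gcongr
        exact ih (by omega)
      _ = _ := by rw [← mul_assoc, ← pow_succ']

end Inverse

end Moser

/-! ### Dilated translations of the Heisenberg group -/

/-- The Reeb vector field `∂_{2n}` of the standard contact form. -/
def reeb (n : ℕ) : Heis n :=
  Pi.single (Fin.last (2 * n)) 1

/-- The linear form `ξ_j` such that `X_j = ∂_j + ξ_j ∂_{2n}`. -/
def reebCoeff (n : ℕ) (j : Fin (2 * n)) : Heis n →L[ℝ] ℝ :=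
  if h : (j : ℕ) < n then
    ContinuousLinearMap.proj (R := ℝ) (φ := fun _ : Fin (2 * n + 1) => ℝ) ⟨n + j, by omega⟩
  else 0

/-- The linear part of `dilatedTranslation n p r`. -/
def dilatedTranslationL (n : ℕ) (p : Heis n) (r : ℝ) : Heis n →L[ℝ] Heis n :=
  r • ContinuousLinearMap.id ℝ _ +
    ((r ^ 2 - r) • ContinuousLinearMap.proj (R := ℝ) (φ := fun _ : Fin (2 * n + 1) => ℝ)
        (Fin.last (2 * n)) +
      r • ∑ j, reebCoeff n j p • ContinuousLinearMap.proj (R := ℝ)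
        (φ := fun _ : Fin (2 * n + 1) => ℝ) j.castSucc).smulRight (reeb n)

/-- The left translate `p · δ_r z` of the parabolic dilate
`δ_r z = (r z_0, …, r z_{2n-1}, r² z_{2n})`, for the group law that makes the `X_j`
left-invariant. -/
def dilatedTranslation (n : ℕ) (p : Heis n) (r : ℝ) (z : Heis n) : Heis n :=
  p + dilatedTranslationL n p r z

/-- The coefficient of the Reeb field in `∂_r (p · δ_r z) / r`. -/
def dilationWeight (n : ℕ) (z : Heis n) : ℝ :=
  2 * z (Fin.last (2 * n)) - ∑ j : Fin (2 * n), z j.castSucc * reebCoeff n j z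

section DilatedTranslation

variable {n : ℕ}

theorem Xvec_eq (j : Fin (2 * n)) (y : Heis n) :
    Xvec n j y = Pi.single j.castSucc 1 + reebCoeff n j y • reeb n := by
  unfold Xvec reebCoeff reeb
  split_ifs with h
  · rfl
  · simp; rfl

@[simp]
theorem reeb_castSucc (j : Fin (2 * n)) : reeb n j.castSucc = 0 :=
  Pi.single_eq_of_ne (Fin.castSucc_lt_last j).ne _

@[simp]
theorem reeb_last : reeb n (Fin.last (2 * n)) = 1 :=
  Pi.single_eq_same _ _

@[simp]
theorem reebCoeff_reeb (j : Fin (2 * n)) : reebCoeff n j (reeb n) = 0 := by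
  unfold reebCoeff reeb
  split_ifs with h
  · exact Pi.single_eq_of_ne (by simp [Fin.ext_iff]; omega) _
  · simp

theorem dilatedTranslationL_apply (p z : Heis n) (r : ℝ) :
    dilatedTranslationL n p r z = r • z + ((r ^ 2 - r) * z (Fin.last (2 * n)) +
      r * ∑ j : Fin (2 * n), reebCoeff n j p * z j.castSucc) • reeb n := by
  simp [dilatedTranslationL]

theorem dilatedTranslation_zero (p z : Heis n) : dilatedTranslation n p 0 z = p := by
  simp [dilatedTranslation, dilatedTranslationL_apply]

theorem contDiff_dilatedTranslation (p : Heis n) (r : ℝ) :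
    ContDiff ℝ ∞ (dilatedTranslation n p r) :=
  contDiff_const.add (dilatedTranslationL n p r).contDiff

theorem continuous_dilatedTranslation :
    Continuous fun q : Heis n × ℝ × Heis n => dilatedTranslation n q.1 q.2.1 q.2.2 := by
  simp only [dilatedTranslation, dilatedTranslationL_apply]
  fun_prop

theorem contDiff_dilationWeight : ContDiff ℝ ∞ (dilationWeight n) := by
  have := fun j => (reebCoeff n j).contDiff (n := ∞)
  unfold dilationWeight
  fun_prop

theorem reebCoeff_dilatedTranslation (j : Fin (2 * n)) (p z : Heis n) (r : ℝ) :
    reebCoeff n j (dilatedTranslation n p r z) = reebCoeff n j p + r * reebCoeff n j z := by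
  simp [dilatedTranslation, dilatedTranslationL_apply]

theorem dilatedTranslationL_Xvec (j : Fin (2 * n)) (p z : Heis n) (r : ℝ) :
    dilatedTranslationL n p r (Xvec n j z) = r • Xvec n j (dilatedTranslation n p r z) := by
  rw [dilatedTranslationL_apply, Xvec_eq, Xvec_eq, reebCoeff_dilatedTranslation]
  simp only [Pi.add_apply, Pi.smul_apply, smul_eq_mul, reeb_last, reeb_castSucc, mul_one, mul_zero,
    add_zero, Pi.single_apply, (Fin.castSucc_lt_last j).ne', Fin.castSucc_inj, if_false, zero_add,
    mul_ite, Finset.sum_ite_eq', Finset.mem_univ, if_true]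
  module

theorem hasDerivAt_dilatedTranslation (p z : Heis n) (r : ℝ) :
    HasDerivAt (fun r => dilatedTranslation n p r z)
      (∑ j, z j.castSucc • Xvec n j (dilatedTranslation n p r z) +
        (r * dilationWeight n z) • reeb n) r := by
  have h : HasDerivAt (fun r => dilatedTranslation n p r z)
      (z + ((2 * r - 1) * z (Fin.last (2 * n)) +
        ∑ j : Fin (2 * n), reebCoeff n j p * z j.castSucc) • reeb n) r := by
    simp only [dilatedTranslation, dilatedTranslationL_apply]
    have hsq : HasDerivAt (fun r : ℝ => r ^ 2 - r) (2 * r - 1) r := by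
      simpa using (hasDerivAt_pow 2 r).fun_sub (hasDerivAt_id' r)
    exact (((hasDerivAt_id r).smul_const z).add (((hsq.mul_const _).add
      ((hasDerivAt_id r).mul_const _)).smul_const _)).const_add p |>.congr_deriv (by simp)
  refine h.congr_deriv (funext fun i => ?_)
  have hsum : ∑ j : Fin (2 * n), z j.castSucc * (reebCoeff n j p + r * reebCoeff n j z) =
      (∑ j : Fin (2 * n), reebCoeff n j p * z j.castSucc) +
        r * ∑ j : Fin (2 * n), z j.castSucc * reebCoeff n j z := by
    rw [Finset.mul_sum, ← Finset.sum_add_distrib]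
    exact Finset.sum_congr rfl fun _ _ => by ring
  induction i using Fin.lastCases with
  | last =>
    simp [Xvec_eq, reebCoeff_dilatedTranslation, dilationWeight, Finset.sum_apply, hsum]
    ring
  | cast k => simp [Xvec_eq, Finset.sum_apply, Pi.single_apply]

theorem det_dilatedTranslationL (p : Heis n) (r : ℝ) :
    (dilatedTranslationL n p r).det = r ^ (2 * n + 2) := by
  rw [ContinuousLinearMap.det, ← LinearMap.det_toMatrix', Matrix.det_of_isLowerTriangular,
    Fin.prod_univ_castSucc]
  · simp [LinearMap.toMatrix'_apply, dilatedTranslationL_apply]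
    ring
  · intro i j hij
    have hij : i < j := hij
    obtain ⟨k, rfl⟩ := Fin.exists_castSucc_eq.2 (hij.trans_le (Fin.le_last j)).ne
    simp [LinearMap.toMatrix'_apply, dilatedTranslationL_apply, hij.ne]

theorem map_dilatedTranslation_volume (p : Heis n) {r : ℝ} (hr : 0 < r) :
    Measure.map (dilatedTranslation n p r) volume =
      ENNReal.ofReal (r ^ (2 * n + 2))⁻¹ • volume := by
  have hdet : LinearMap.det (dilatedTranslationL n p r : Heis n →ₗ[ℝ] Heis n) = r ^ (2 * n + 2) :=
    det_dilatedTranslationL p r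
  have hlin : Measure.map (dilatedTranslationL n p r) volume =
      ENNReal.ofReal (r ^ (2 * n + 2))⁻¹ • (volume : Measure (Heis n)) := by
    have h := Measure.map_linearMap_addHaar_eq_smul_addHaar (μ := (volume : Measure (Heis n)))
      (f := (dilatedTranslationL n p r : Heis n →ₗ[ℝ] Heis n)) (by rw [hdet]; positivity)
    rwa [hdet, abs_of_pos (by positivity)] at h
  rw [show dilatedTranslation n p r = (p + ·) ∘ dilatedTranslationL n p r from rfl,
    ← Measure.map_map (by fun_prop) (dilatedTranslationL n p r).continuous.measurable, hlin,
    Measure.map_smul, map_add_left_eq_self]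

end DilatedTranslation

section GlobalCalculus

variable {n : ℕ} {u : Heis n → E}

theorem contDiff_hDeriv (hu : ContDiff ℝ ∞ u) (j : Fin (2 * n)) : ContDiff ℝ ∞ (hDeriv n j u) :=
  contDiff_iff_contDiffAt.2 fun _ => contDiffAt_hDeriv hu.contDiffAt j

theorem hDeriv_comp_dilatedTranslation (hu : ContDiff ℝ ∞ u) (j : Fin (2 * n)) (p z : Heis n)
    (r : ℝ) : hDeriv n j (u ∘ dilatedTranslation n p r) z =
      r • hDeriv n j u (dilatedTranslation n p r z) := by
  have hinner : HasFDerivAt (dilatedTranslation n p r) (dilatedTranslationL n p r) z :=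
    (dilatedTranslationL n p r).hasFDerivAt.const_add p
  have houter := (hu.differentiable (by simp) (dilatedTranslation n p r z)).hasFDerivAt
  simp [hDeriv, (houter.comp z hinner).fderiv, dilatedTranslationL_Xvec]

theorem hDeriv_hDeriv_apply (hu : ContDiff ℝ ∞ u) (i j : Fin (2 * n)) (y : Heis n) :
    hDeriv n i (hDeriv n j u) y = fderiv ℝ (fderiv ℝ u) y (Xvec n i y) (Xvec n j y) +
      reebCoeff n j (Xvec n i y) • T0Deriv n u y := by
  have hfderiv : HasFDerivAt (fderiv ℝ u) (fderiv ℝ (fderiv ℝ u) y) y :=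
    ((hu.fderiv_right (m := ∞) (by simp)).differentiable (by simp) _).hasFDerivAt
  have hfield : HasFDerivAt (Xvec n j) ((reebCoeff n j).smulRight (reeb n)) y := by
    rw [show Xvec n j = fun y => Pi.single j.castSucc 1 + (reebCoeff n j).smulRight (reeb n) y from
      funext (Xvec_eq j)]
    exact ((reebCoeff n j).smulRight (reeb n)).hasFDerivAt.const_add _
  rw [hDeriv, show fderiv ℝ (hDeriv n j u) y = _ from (hfderiv.clm_apply hfield).fderiv]
  simp [T0Deriv, reeb, add_comm]
  rfl

theorem hDeriv_commutator (hu : ContDiff ℝ ∞ u) (i j : Fin (2 * n)) (y : Heis n) :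
    hDeriv n i (hDeriv n j u) y - hDeriv n j (hDeriv n i u) y =
      (reebCoeff n j (Xvec n i y) - reebCoeff n i (Xvec n j y)) • T0Deriv n u y := by
  have hsymm : IsSymmSndFDerivAt ℝ u y :=
    hu.contDiffAt.isSymmSndFDerivAt (by
      rw [minSmoothness_of_isRCLikeNormedField]
      exact WithTop.coe_mono (le_top : (2 : ℕ∞) ≤ ⊤))
  rw [hDeriv_hDeriv_apply hu, hDeriv_hDeriv_apply hu, hsymm (Xvec n i y), sub_smul]
  abel

theorem exists_hDeriv_commutator_eq_T0Deriv (hn : 1 ≤ n) :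
    ∃ i j : Fin (2 * n), ∀ u : Heis n → E, ContDiff ℝ ∞ u →
      T0Deriv n u = hDeriv n i (hDeriv n j u) - hDeriv n j (hDeriv n i u) := by
  refine ⟨⟨n, by omega⟩, ⟨0, by omega⟩, fun u hu => funext fun y => ?_⟩
  have hcoeff : reebCoeff n ⟨0, by omega⟩ (Xvec n ⟨n, by omega⟩ y) -
      reebCoeff n ⟨n, by omega⟩ (Xvec n ⟨0, by omega⟩ y) = 1 := by
    simp [reebCoeff, Xvec, show 0 < n from hn]
  rw [Pi.sub_apply, hDeriv_commutator hu, hcoeff, one_smul]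

theorem integral_hDeriv_eq_zero (hu : ContDiff ℝ ∞ u) (huc : HasCompactSupport u)
    (j : Fin (2 * n)) : ∫ z, hDeriv n j u z = 0 := by
  have hint : ∀ (a : Heis n → ℝ) (v : Heis n), Continuous a →
      Integrable fun z => a z • fderiv ℝ u z v := fun a v ha =>
    (ha.smul ((hu.continuous_fderiv (by simp)).clm_apply continuous_const))
      |>.integrable_of_hasCompactSupport (huc.fderiv_apply (𝕜 := ℝ) v).smul_left
  have hzero : ∀ (a : Heis n → ℝ) (v : Heis n), ContDiff ℝ ∞ a → (∀ z, fderiv ℝ a z v = 0) →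
      ∫ z, a z • fderiv ℝ u z v = 0 := fun a v ha hav => by
    rw [integral_smul_fderiv_eq_neg_fderiv_smul_of_integrable (by simp [hav])
      (hint a v ha.continuous)
      ((ha.continuous.smul hu.continuous).integrable_of_hasCompactSupport huc.smul_left)
      (fun z _ => ha.differentiable (by simp) z) (fun z _ => hu.differentiable (by simp) z)]
    simp [hav]
  calc ∫ z, hDeriv n j u z
      = ∫ z, ((1 : ℝ) • fderiv ℝ u z (Pi.single j.castSucc 1) +
          reebCoeff n j z • fderiv ℝ u z (reeb n)) := by simp [hDeriv, Xvec_eq]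
    _ = 0 := by
      rw [integral_add (hint _ _ continuous_const) (hint _ _ (reebCoeff n j).continuous),
        hzero _ _ contDiff_const (by simp), hzero _ _ (reebCoeff n j).contDiff (by simp), add_zero]

theorem hDeriv_smul {ψ : Heis n → ℝ} (hψ : ContDiff ℝ ∞ ψ) (hu : ContDiff ℝ ∞ u) (j : Fin (2 * n))
    (z : Heis n) : hDeriv n j (ψ • u) z = hDeriv n j ψ z • u z + ψ z • hDeriv n j u z := by
  simp [hDeriv, fderiv_smul (hψ.differentiable (by simp) z) (hu.differentiable (by simp) z),
    add_comm]

theorem tsupport_hDeriv_subset (u : Heis n → E) (j : Fin (2 * n)) :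
    tsupport (hDeriv n j u) ⊆ tsupport u := by
  have h : Function.support (hDeriv n j u) ⊆ Function.support (fderiv ℝ u) := fun z hz => by
    contrapose! hz
    simp [hDeriv, Function.notMem_support.1 hz]
  exact (closure_mono h).trans (tsupport_fderiv_subset ℝ)

theorem hasCompactSupport_hDeriv (hu : HasCompactSupport u) (j : Fin (2 * n)) :
    HasCompactSupport (hDeriv n j u) :=
  hu.of_isClosed_subset (isClosed_tsupport _) (tsupport_hDeriv_subset u j)

theorem integral_smul_hDeriv_eq_neg {ψ : Heis n → ℝ} (hψ : ContDiff ℝ ∞ ψ)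
    (hψc : HasCompactSupport ψ) (hu : ContDiff ℝ ∞ u) (j : Fin (2 * n)) :
    ∫ z, ψ z • hDeriv n j u z = -∫ z, hDeriv n j ψ z • u z := by
  have hint₁ : Integrable fun z => hDeriv n j ψ z • u z :=
    ((contDiff_hDeriv hψ j).continuous.smul hu.continuous).integrable_of_hasCompactSupport
      (hasCompactSupport_hDeriv hψc j).smul_right
  have hint₂ : Integrable fun z => ψ z • hDeriv n j u z :=
    (hψ.continuous.smul (contDiff_hDeriv hu j).continuous).integrable_of_hasCompactSupport
      hψc.smul_right
  have h := integral_hDeriv_eq_zero (hψ.smul hu) hψc.smul_right j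
  simp only [hDeriv_smul hψ hu] at h
  rwa [integral_add hint₁ hint₂, add_comm, ← eq_neg_iff_add_eq_zero] at h

end GlobalCalculus

/-! ### Averages over dilated translates -/

theorem hasDerivAt_integral_smul_of_hasCompactSupport {X : Type*} [TopologicalSpace X]
    [SecondCountableTopology X] [MeasurableSpace X] [OpensMeasurableSpace X] {μ : Measure X}
    [IsFiniteMeasureOnCompacts μ] {φ : X → ℝ} (hφ : Continuous φ) (hφc : HasCompactSupport φ)
    {F F' : ℝ → X → E} (hF : ∀ r, Continuous (F r)) (hF' : Continuous fun q : ℝ × X => F' q.1 q.2)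
    (hderiv : ∀ r z, HasDerivAt (F · z) (F' r z) r) (r : ℝ) :
    HasDerivAt (fun r => ∫ z, φ z • F r z ∂μ) (∫ z, φ z • F' r z ∂μ) r := by
  have hcont : Continuous fun q : ℝ × X => φ q.2 • F' q.1 q.2 :=
    (hφ.comp continuous_snd).smul hF'
  obtain ⟨M, hM⟩ := ((isCompact_closedBall r 1).prod hφc.isCompact).exists_bound_of_continuousOn
    hcont.continuousOn
  refine (hasDerivAt_integral_of_dominated_loc_of_deriv_le (F := fun r z => φ z • F r z)
    (F' := fun r z => φ z • F' r z) (bound := (tsupport φ).indicator fun _ => M)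
    (Metric.closedBall_mem_nhds r one_pos)
    (.of_forall fun r => (hφ.smul (hF r)).aestronglyMeasurable)
    ((hφ.smul (hF r)).integrable_of_hasCompactSupport hφc.smul_right)
    (hcont.comp (.prodMk_right r)).aestronglyMeasurable
    (.of_forall fun z ρ hρ => ?_) ?_ (.of_forall fun z ρ _ => (hderiv ρ z).const_smul (φ z))).2
  · by_cases hz : z ∈ tsupport φ
    · simpa only [Set.indicator_of_mem hz] using hM (ρ, z) ⟨hρ, hz⟩
    · simp [Set.indicator_of_notMem hz, image_eq_zero_of_notMem_tsupport hz]
  · exact (integrable_indicator_iff (isClosed_tsupport φ).measurableSet).2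
      (integrableOn_const hφc.isCompact.measure_lt_top.ne)

/-- The smooth functions supported in `B`. -/
def IsTestFunction {n : ℕ} (B : Set (Heis n)) (φ : Heis n → ℝ) : Prop :=
  ContDiff ℝ ∞ φ ∧ tsupport φ ⊆ B

/-- The average `∫ φ(z) u(p · δ_r z) dz` of `u` over dilates of `φ` around `p`. For `∫ φ = 1` it
tends to `u p` as `r → 0`. -/
def dilationAverage (n : ℕ) (φ : Heis n → ℝ) (u : Heis n → E) (p : Heis n) (r : ℝ) : E :=
  ∫ z, φ z • u (dilatedTranslation n p r z)

section DilationAverage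

variable {n : ℕ} {B D : Set (Heis n)} {φ ψ : Heis n → ℝ} {u : Heis n → E}

theorem IsTestFunction.hasCompactSupport (hφ : IsTestFunction B φ) (hB : IsCompact B) :
    HasCompactSupport φ :=
  hB.of_isClosed_subset (isClosed_tsupport _) hφ.2

theorem IsTestFunction.mul (hφ : IsTestFunction B φ) (hψ : ContDiff ℝ ∞ ψ) :
    IsTestFunction B (φ * ψ) :=
  ⟨hφ.1.mul hψ, tsupport_mul_subset_left.trans hφ.2⟩

theorem isTestFunction_hDeriv (hφ : IsTestFunction B φ) (j : Fin (2 * n)) :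
    IsTestFunction B (hDeriv n j φ) :=
  ⟨contDiff_hDeriv hφ.1 j, (tsupport_hDeriv_subset φ j).trans hφ.2⟩

theorem integrable_smul_comp_dilatedTranslation (hφ : IsTestFunction B φ) (hB : IsCompact B)
    (hu : Continuous u) (p : Heis n) (r : ℝ) :
    Integrable fun z => φ z • u (dilatedTranslation n p r z) :=
  (hφ.1.continuous.smul (hu.comp (contDiff_dilatedTranslation p r).continuous))
    |>.integrable_of_hasCompactSupport (hφ.hasCompactSupport hB).smul_right

theorem dilationAverage_sub (hφ : IsTestFunction B φ) (hB : IsCompact B) {v : Heis n → E}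
    (hu : Continuous u) (hv : Continuous v) (p : Heis n) (r : ℝ) :
    dilationAverage n φ (u - v) p r = dilationAverage n φ u p r - dilationAverage n φ v p r := by
  simp only [dilationAverage, Pi.sub_apply, smul_sub]
  exact integral_sub (integrable_smul_comp_dilatedTranslation hφ hB hu p r)
    (integrable_smul_comp_dilatedTranslation hφ hB hv p r)

theorem hasDerivAt_comp_dilatedTranslation (hu : ContDiff ℝ ∞ u) (p z : Heis n) (r : ℝ) :
    HasDerivAt (fun r => u (dilatedTranslation n p r z))
      (∑ j, z j.castSucc • hDeriv n j u (dilatedTranslation n p r z) +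
        (r * dilationWeight n z) • T0Deriv n u (dilatedTranslation n p r z)) r := by
  have h := (hu.differentiable (by simp) (dilatedTranslation n p r z)).hasFDerivAt.comp_hasDerivAt r
    (hasDerivAt_dilatedTranslation p z r)
  refine h.congr_deriv ?_
  simp only [map_add, map_sum, map_smul]
  rfl

theorem continuous_T0Deriv (hu : ContDiff ℝ ∞ u) : Continuous (T0Deriv n u) :=
  (hu.continuous_fderiv (by simp)).clm_apply continuous_const

theorem hasDerivAt_dilationAverage (hφ : IsTestFunction B φ) (hB : IsCompact B)
    (hu : ContDiff ℝ ∞ u) (p : Heis n) (r : ℝ) :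
    HasDerivAt (dilationAverage n φ u p)
      (∑ j, dilationAverage n (φ * fun z => z j.castSucc) (hDeriv n j u) p r +
        r • dilationAverage n (φ * dilationWeight n) (T0Deriv n u) p r) r := by
  have hcomp : ∀ {v : Heis n → E}, Continuous v →
      Continuous fun q : ℝ × Heis n => v (dilatedTranslation n p q.1 q.2) := fun hv =>
    hv.comp (continuous_dilatedTranslation.comp (.prodMk_right p))
  have hX := fun j => (contDiff_hDeriv hu j).continuous
  have hcont : Continuous fun q : ℝ × Heis n =>
      ∑ j, q.2 j.castSucc • hDeriv n j u (dilatedTranslation n p q.1 q.2) +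
        (q.1 * dilationWeight n q.2) • T0Deriv n u (dilatedTranslation n p q.1 q.2) :=
    (continuous_finsetSum _ fun j _ => Continuous.smul (by fun_prop) (hcomp (hX j))).add
      ((continuous_fst.mul (contDiff_dilationWeight.continuous.comp continuous_snd)).smul
        (hcomp (continuous_T0Deriv hu)))
  have hcoord : ∀ j : Fin (2 * n), IsTestFunction B (φ * fun z => z j.castSucc) :=
    fun j => hφ.mul (by fun_prop)
  have hweight := hφ.mul contDiff_dilationWeight
  refine (hasDerivAt_integral_smul_of_hasCompactSupport hφ.1.continuous (hφ.hasCompactSupport hB)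
    (fun r => hu.continuous.comp (contDiff_dilatedTranslation p r).continuous) hcont
    (fun r z => hasDerivAt_comp_dilatedTranslation hu p z r) r).congr_deriv ?_
  have hint := fun j => integrable_smul_comp_dilatedTranslation (hcoord j) hB (hX j) p r
  have hintT : Integrable fun z =>
      r • (φ * dilationWeight n) z • T0Deriv n u (dilatedTranslation n p r z) :=
    (integrable_smul_comp_dilatedTranslation hweight hB (continuous_T0Deriv hu) p r).smul r
  simp only [dilationAverage]
  rw [← integral_smul, ← integral_finsetSum _ fun j _ => hint j, ← integral_add
    (integrable_finsetSum _ fun j _ => hint j) hintT]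
  refine integral_congr_ae (.of_forall fun z => ?_)
  simp only [Pi.mul_apply, smul_add, Finset.smul_sum, mul_smul, smul_comm (φ z) r]

theorem smul_dilationAverage_hDeriv (hψ : IsTestFunction B ψ) (hB : IsCompact B)
    (hu : ContDiff ℝ ∞ u) (j : Fin (2 * n)) (p : Heis n) (r : ℝ) :
    r • dilationAverage n ψ (hDeriv n j u) p r = -dilationAverage n (hDeriv n j ψ) u p r := by
  have h := integral_smul_hDeriv_eq_neg hψ.1 (hψ.hasCompactSupport hB)
    (hu.comp (contDiff_dilatedTranslation p r)) j
  simp only [hDeriv_comp_dilatedTranslation hu, Function.comp_apply] at h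
  rw [dilationAverage, ← integral_smul, dilationAverage]
  simpa only [smul_comm r] using h

/-- The Reeb field is a commutator of horizontal ones, and the factor `r` in front of it pays for
the integration by parts: only first-order horizontal derivatives of `u` remain, without loss in
`r`. -/
theorem exists_hasDerivAt_dilationAverage (hn : 1 ≤ n) (hφ : IsTestFunction B φ)
    (hB : IsCompact B) :
    ∃ i j : Fin (2 * n), ∀ u : Heis n → E, ContDiff ℝ ∞ u → ∀ p r,
      HasDerivAt (dilationAverage n φ u p)
        (∑ k, dilationAverage n (φ * fun z => z k.castSucc) (hDeriv n k u) p r +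
          (dilationAverage n (hDeriv n j (φ * dilationWeight n)) (hDeriv n i u) p r -
            dilationAverage n (hDeriv n i (φ * dilationWeight n)) (hDeriv n j u) p r)) r := by
  obtain ⟨i, j, hij⟩ := exists_hDeriv_commutator_eq_T0Deriv (E := E) hn
  refine ⟨i, j, fun u hu p r => (hasDerivAt_dilationAverage hφ hB hu p r).congr_deriv ?_⟩
  have hψ := hφ.mul contDiff_dilationWeight
  have hX := contDiff_hDeriv hu
  rw [hij u hu, dilationAverage_sub hψ hB (contDiff_hDeriv (hX j) i).continuous
    (contDiff_hDeriv (hX i) j).continuous, smul_sub, smul_dilationAverage_hDeriv hψ hB (hX j),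
    smul_dilationAverage_hDeriv hψ hB (hX i), neg_sub_neg]

theorem eLpNorm_comp_dilatedTranslation_le {F : Type*} [NormedAddCommGroup F] {u : Heis n → F}
    (hu : Continuous u) (hD : MeasurableSet D) {p : Heis n} {r : ℝ} (hr : 0 < r)
    (hBD : Set.MapsTo (dilatedTranslation n p r) B D) :
    eLpNorm (u ∘ dilatedTranslation n p r) 2 (volume.restrict B) ≤
      ENNReal.ofReal (r ^ (n + 1))⁻¹ * eLpNorm u 2 (volume.restrict D) := by
  have hmeas := (contDiff_dilatedTranslation p r).continuous.measurable
  have hscale : ENNReal.ofReal (r ^ (2 * n + 2))⁻¹ ^ (1 / 2 : ℝ≥0∞).toReal =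
      ENNReal.ofReal (r ^ (n + 1))⁻¹ := by
    rw [ENNReal.ofReal_rpow_of_nonneg (by positivity) (by positivity),
      show (r ^ (2 * n + 2))⁻¹ = (r ^ (n + 1))⁻¹ ^ 2 by rw [inv_pow, ← pow_mul]; ring_nf]
    simp only [one_div, ENNReal.toReal_inv, ENNReal.toReal_ofNat]
    exact congrArg ENNReal.ofReal (Real.pow_rpow_inv_natCast (by positivity) two_ne_zero)
  calc eLpNorm (u ∘ dilatedTranslation n p r) 2 (volume.restrict B)
      ≤ eLpNorm (u ∘ dilatedTranslation n p r) 2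
          (volume.restrict (dilatedTranslation n p r ⁻¹' D)) :=
        eLpNorm_mono_measure _ (Measure.restrict_mono hBD le_rfl)
    _ = eLpNorm u 2 ((volume.map (dilatedTranslation n p r)).restrict D) := by
        rw [Measure.restrict_map hmeas hD,
          eLpNorm_map_measure hu.aestronglyMeasurable hmeas.aemeasurable]
    _ = ENNReal.ofReal (r ^ (n + 1))⁻¹ * eLpNorm u 2 (volume.restrict D) := by
        rw [map_dilatedTranslation_volume p hr, Measure.restrict_smul,
          eLpNorm_smul_measure_of_ne_top (by simp), hscale, smul_eq_mul]

theorem enorm_dilationAverage_le (hφ : IsTestFunction B φ) (hu : Continuous u)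
    (hD : MeasurableSet D) {p : Heis n} {r : ℝ} (hr : 0 < r)
    (hBD : Set.MapsTo (dilatedTranslation n p r) B D) :
    ‖dilationAverage n φ u p r‖ₑ ≤ eLpNorm φ 2 volume *
      (ENNReal.ofReal (r ^ (n + 1))⁻¹ * eLpNorm u 2 (volume.restrict D)) := by
  have hcomp : Continuous (u ∘ dilatedTranslation n p r) :=
    hu.comp (contDiff_dilatedTranslation p r).continuous
  have hsupp : ∀ z, z ∉ B → φ z • u (dilatedTranslation n p r z) = 0 := fun z hz => by
    rw [image_eq_zero_of_notMem_tsupport fun h => hz (hφ.2 h), zero_smul]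
  calc ‖dilationAverage n φ u p r‖ₑ
      = ‖∫ z in B, (φ • (u ∘ dilatedTranslation n p r)) z‖ₑ :=
        congrArg _ (setIntegral_eq_integral_of_forall_compl_eq_zero hsupp).symm
    _ ≤ eLpNorm (φ • (u ∘ dilatedTranslation n p r)) 1 (volume.restrict B) := by
        rw [eLpNorm_one_eq_lintegral_enorm]
        exact enorm_integral_le_lintegral_enorm _
    _ ≤ eLpNorm φ 2 (volume.restrict B) *
          eLpNorm (u ∘ dilatedTranslation n p r) 2 (volume.restrict B) :=
        eLpNorm_smul_le_mul_eLpNorm hcomp.aestronglyMeasurable hφ.1.continuous.aestronglyMeasurable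
    _ ≤ _ := mul_le_mul' (eLpNorm_mono_measure _ Measure.restrict_le_self)
        (eLpNorm_comp_dilatedTranslation_le hu hD hr hBD)

end DilationAverage

/-! ### The horizontal Sobolev inequality -/

theorem norm_le_of_norm_deriv_le_one_add_rpow {g g' : ℝ → E} {K a : ℝ} (ha : a ≠ 0)
    (hg : ∀ ρ ∈ Ioc 0 1, HasDerivAt g (g' ρ) ρ)
    (hg' : ∀ ρ ∈ Ioc 0 1, ‖g' ρ‖ ≤ K * (1 + ρ ^ (a - 1))) (hg1 : ‖g 1‖ ≤ K) {r : ℝ}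
    (hr : r ∈ Ioc 0 1) : ‖g r‖ ≤ K * ((2 + |a|⁻¹) * (1 + r ^ a)) := by
  have hK : 0 ≤ K := (norm_nonneg _).trans hg1
  have hra : 0 ≤ r ^ a := Real.rpow_nonneg hr.1.le a
  have hzero : (0 : ℝ) ∉ Set.uIcc r 1 := by simp [Set.uIcc_of_le hr.2, hr.1]
  have hint := intervalIntegral.intervalIntegrable_rpow (μ := volume) (r := a - 1) (.inr hzero)
  have hIcc : ∀ ρ ∈ Icc r 1, ρ ∈ Ioc 0 1 := fun ρ hρ => ⟨hr.1.trans_le hρ.1, hρ.2⟩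
  have hsub : ‖g 1 - g r‖ ≤ ∫ ρ in r..1, K * (1 + ρ ^ (a - 1)) :=
    norm_sub_le_integral_of_norm_deriv_le_of_le hr.2
      (fun ρ hρ => (hg ρ (hIcc ρ hρ)).continuousAt.continuousWithinAt)
      (fun ρ hρ => (hg ρ (hIcc ρ (Set.Ioo_subset_Icc_self hρ))).differentiableAt
        |>.differentiableWithinAt)
      (.of_forall fun ρ hρ => by
        have hρ := hIcc ρ (Set.Ioo_subset_Icc_self hρ)
        simpa only [(hg ρ hρ).deriv] using hg' ρ hρ)
      ((intervalIntegrable_const.add hint).const_mul K)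
  have hval : ∫ ρ in r..1, K * (1 + ρ ^ (a - 1)) = K * (1 - r + (1 - r ^ a) / a) := by
    rw [intervalIntegral.integral_const_mul,
      intervalIntegral.integral_add intervalIntegrable_const hint,
      integral_rpow (.inr ⟨by simpa [sub_eq_iff_eq_add] using ha, hzero⟩)]
    simp
  have hquot : (1 - r ^ a) / a ≤ |a|⁻¹ * (1 + r ^ a) :=
    calc (1 - r ^ a) / a ≤ |1 - r ^ a| / |a| := by rw [← abs_div]; exact le_abs_self _
      _ ≤ |a|⁻¹ * (1 + r ^ a) := by
        rw [div_eq_inv_mul]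
        gcongr
        exact abs_le.2 ⟨by linarith, by linarith⟩
  calc ‖g r‖ ≤ ‖g 1‖ + ‖g 1 - g r‖ := norm_le_norm_add_norm_sub _ _
    _ ≤ K + K * (1 - r + (1 - r ^ a) / a) := add_le_add hg1 (hsub.trans_eq hval)
    _ = K * (1 + (1 - r + (1 - r ^ a) / a)) := by ring
    _ ≤ _ := by
      gcongr
      linarith [hr.1]

/-- The estimate `‖∫ φ(z) u(p · δ_r z) dz‖ ≤ C (1 + r^e) ‖u‖_m` for `r ∈ (0, 1]`, where `‖u‖_m` is
the `L²(D)` Folland–Stein norm of order `m`, uniformly in the points `p` whose dilated translates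
map `B` into `D`. -/
def DilationAverageBound (E : Type*) [NormedAddCommGroup E] [NormedSpace ℝ E] {n : ℕ}
    (B D : Set (Heis n)) (m : ℕ) (e : ℝ) (φ : Heis n → ℝ) (C : ℝ≥0) : Prop :=
  ∀ u : Heis n → E, ContDiff ℝ ∞ u → ∀ N : ℝ≥0, eSobolevNorm n m u 2 (volume.restrict D) ≤ N →
    ∀ p, (∀ r ∈ Ioc (0 : ℝ) 1, Set.MapsTo (dilatedTranslation n p r) B D) →
    ∀ r ∈ Ioc (0 : ℝ) 1, ‖dilationAverage n φ u p r‖ ≤ C * N * (1 + r ^ e)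

section Sobolev

variable {n : ℕ} {B D K : Set (Heis n)} {φ : Heis n → ℝ}

theorem exists_dilationAverageBound_zero (hB : IsCompact B) (hD : MeasurableSet D)
    (hφ : IsTestFunction B φ) : ∃ C, DilationAverageBound E B D 0 (-n - 3 / 2) φ C := by
  have hφ2 : eLpNorm φ 2 volume ≠ ⊤ :=
    (hφ.1.continuous.memLp_of_hasCompactSupport (hφ.hasCompactSupport hB)).eLpNorm_ne_top
  refine ⟨(eLpNorm φ 2 volume).toNNReal, fun u hu N hN p hBD r hr => ?_⟩
  have hu2 : eLpNorm u 2 (volume.restrict D) ≤ N :=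
    (eLpNorm_XI_le_eSobolevNorm (I := []) le_rfl).trans hN
  have hpow : (r ^ (n + 1))⁻¹ ≤ 1 + r ^ (-n - 3 / 2 : ℝ) := by
    rw [← Real.rpow_natCast, ← Real.rpow_neg hr.1.le]
    refine (Real.rpow_le_rpow_of_exponent_ge hr.1 hr.2 ?_).trans (le_add_of_nonneg_left zero_le_one)
    push_cast
    linarith
  have h := (enorm_dilationAverage_le hφ hu.continuous hD hr.1 (hBD r hr)).trans
    (mul_le_mul' le_rfl (mul_le_mul' le_rfl hu2))
  have hreal := ENNReal.toReal_mono (by finiteness) h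
  rw [toReal_enorm, ENNReal.toReal_mul, ENNReal.toReal_mul, ENNReal.coe_toReal,
    ENNReal.toReal_ofReal (by have := hr.1; positivity), mul_comm _ (N : ℝ), ← mul_assoc] at hreal
  exact hreal.trans (mul_le_mul_of_nonneg_left hpow (by positivity))

theorem exists_dilationAverageBound_succ (hn : 1 ≤ n) (hB : IsCompact B) {m : ℕ} {e : ℝ}
    (he : e + 1 ≠ 0) (hbound : ∀ φ, IsTestFunction B φ → ∃ C, DilationAverageBound E B D m e φ C)
    (hφ : IsTestFunction B φ) : ∃ C, DilationAverageBound E B D (m + 1) (e + 1) φ C := by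
  have hw := hφ.mul contDiff_dilationWeight
  obtain ⟨i, j, hderiv⟩ := exists_hasDerivAt_dilationAverage (E := E) hn hφ hB
  obtain ⟨C₀, hC₀⟩ := hbound φ hφ
  choose C hC using fun k : Fin (2 * n) =>
    hbound (φ * fun z => z k.castSucc) (hφ.mul (by fun_prop))
  obtain ⟨Ci, hCi⟩ := hbound _ (isTestFunction_hDeriv hw i)
  obtain ⟨Cj, hCj⟩ := hbound _ (isTestFunction_hDeriv hw j)
  set C₁ : ℝ≥0 := ∑ k, C k + (Cj + Ci) + 2 * C₀ with hC₁
  refine ⟨C₁ * (2 + ‖e + 1‖₊⁻¹), fun u hu N hN p hBD r hr => ?_⟩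
  have hX : ∀ k, eSobolevNorm n m (hDeriv n k u) 2 (volume.restrict D) ≤ N := fun k =>
    (eSobolevNorm_XI_le [k] le_rfl).trans hN
  have hu' : eSobolevNorm n m u 2 (volume.restrict D) ≤ N :=
    (eSobolevNorm_XI_le [] (Nat.le_succ m)).trans hN
  have hone : ‖dilationAverage n φ u p 1‖ ≤ C₁ * N := by
    refine (hC₀ u hu N hu' p hBD 1 ⟨one_pos, le_rfl⟩).trans ?_
    rw [Real.one_rpow, hC₁]
    push_cast
    have : (0 : ℝ) ≤ (∑ k, (C k : ℝ) + (Cj + Ci)) * N := by positivity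
    linarith
  refine (norm_le_of_norm_deriv_le_one_add_rpow he (fun ρ _ => hderiv u hu p ρ) (K := C₁ * N)
    (fun ρ hρ => ?_) hone hr).trans_eq (by push_cast [Real.norm_eq_abs]; ring)
  have hpow : 0 ≤ ρ ^ e := Real.rpow_nonneg hρ.1.le e
  rw [add_sub_cancel_right]
  calc _ ≤ ∑ k, C k * N * (1 + ρ ^ e) + (Cj * N * (1 + ρ ^ e) + Ci * N * (1 + ρ ^ e)) :=
        norm_add_le_of_le (norm_sum_le_of_le _ fun k _ =>
            hC k _ (contDiff_hDeriv hu k) N (hX k) p hBD ρ hρ) <|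
          norm_sub_le_of_le (hCj _ (contDiff_hDeriv hu i) N (hX i) p hBD ρ hρ)
            (hCi _ (contDiff_hDeriv hu j) N (hX j) p hBD ρ hρ)
    _ = (∑ k, C k + (Cj + Ci) : ℝ≥0) * N * (1 + ρ ^ e) := by
        simp only [← Finset.sum_mul]
        push_cast
        ring
    _ ≤ C₁ * N * (1 + ρ ^ e) := by
        gcongr
        exact le_self_add

/-- Half-integer exponents keep the integration in `r` away from the logarithm. -/
theorem exists_dilationAverageBound (hn : 1 ≤ n) (hB : IsCompact B) (hD : MeasurableSet D) (m : ℕ)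
    (hφ : IsTestFunction B φ) : ∃ C, DilationAverageBound E B D m (-n - 3 / 2 + m) φ C := by
  induction m generalizing φ with
  | zero => simpa using exists_dilationAverageBound_zero (E := E) hB hD hφ
  | succ m ih =>
    have he : (-n - 3 / 2 + m + 1 : ℝ) ≠ 0 := fun h => by
      have h : (2 * m : ℝ) = 2 * n + 1 := by linarith
      norm_cast at h
      omega
    rw [Nat.cast_succ, ← add_assoc]
    exact exists_dilationAverageBound_succ hn hB he (fun _ => ih) hφ

theorem exists_dilatedTranslation_mem (hK : IsCompact K) (hD : IsOpen D) (hKD : K ⊆ D) :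
    ∃ ε > 0, ∀ p ∈ K, ∀ r ∈ Icc (0 : ℝ) 1,
      Set.MapsTo (dilatedTranslation n p r) (Metric.closedBall 0 ε) D := by
  obtain ⟨U, V, -, hV, hKU, hV0, hUV⟩ := generalized_tube_lemma
    (hK.prod (isCompact_Icc (a := (0 : ℝ)) (b := 1))) (isCompact_singleton (x := (0 : Heis n)))
    (n := (fun q : (Heis n × ℝ) × Heis n => dilatedTranslation n q.1.1 q.1.2 q.2) ⁻¹' D)
    (hD.preimage (continuous_dilatedTranslation.comp
      (continuous_fst.fst.prodMk (continuous_fst.snd.prodMk continuous_snd))))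
    (by
      rintro ⟨⟨p, r⟩, z⟩ ⟨⟨hp, -⟩, rfl⟩
      simpa [dilatedTranslation] using hKD hp)
  obtain ⟨ε, hε, hεV⟩ := Metric.nhds_basis_closedBall.mem_iff.1 (hV.mem_nhds (hV0 rfl))
  exact ⟨ε, hε, fun p hp r hr z hz => hUV (a := ((p, r), z)) ⟨hKU ⟨hp, hr⟩, hεV hz⟩⟩

variable [CompleteSpace E]

theorem isTestFunction_normed (φ : ContDiffBump (0 : Heis n)) :
    IsTestFunction (Metric.closedBall 0 φ.rOut) (φ.normed volume) :=
  ⟨φ.contDiff_normed, φ.tsupport_normed_eq.subset⟩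

theorem tendsto_dilationAverage_normed (φ : ContDiffBump (0 : Heis n)) {u : Heis n → E}
    (hu : ContDiff ℝ ∞ u) (p : Heis n) :
    Tendsto (dilationAverage n (φ.normed volume) u p) (𝓝 0) (𝓝 (u p)) := by
  have h := (hasDerivAt_dilationAverage (isTestFunction_normed φ) (isCompact_closedBall 0 φ.rOut)
    hu p 0).continuousAt.tendsto
  rwa [show dilationAverage n (φ.normed volume) u p 0 = u p by
    simp [dilationAverage, dilatedTranslation_zero, φ.integral_normed_smul]] at h

theorem exists_enorm_le_eSobolevNorm_of_contDiff (hn : 1 ≤ n) (hK : IsCompact K) (hD : IsOpen D)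
    (hKD : K ⊆ D) :
    ∃ C : ℝ≥0, ∀ u : Heis n → E, ContDiff ℝ ∞ u → ∀ p ∈ K,
      ‖u p‖ₑ ≤ C * eSobolevNorm n (n + 2) u 2 (volume.restrict D) := by
  obtain ⟨ε, hε, hball⟩ := exists_dilatedTranslation_mem hK hD hKD
  let φ : ContDiffBump (0 : Heis n) := ⟨ε / 2, ε, by positivity, by linarith⟩
  obtain ⟨C, hC⟩ := exists_dilationAverageBound (E := E) hn (isCompact_closedBall 0 ε)
    hD.measurableSet (n + 2) (isTestFunction_normed φ)
  refine ⟨C + 1, fun u hu p hp => ?_⟩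
  rcases eq_or_ne (eSobolevNorm n (n + 2) u 2 (volume.restrict D)) ⊤ with htop | hfin
  · simp [htop, ENNReal.mul_top]
  lift eSobolevNorm n (n + 2) u 2 (volume.restrict D) to ℝ≥0 using hfin with N hN
  have hexp : (-n - 3 / 2 + (n + 2 : ℕ) : ℝ) = 1 / 2 := by push_cast; ring
  have hbound := hC u hu N hN.ge p fun r hr => hball p hp r ⟨hr.1.le, hr.2⟩
  rw [hexp] at hbound
  have hlim : Tendsto (fun r => ‖dilationAverage n (φ.normed volume) u p r‖) (𝓝[>] 0)
      (𝓝 ‖u p‖) := (tendsto_dilationAverage_normed φ hu p).norm.mono_left nhdsWithin_le_nhds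
  have hlimit : Tendsto (fun r : ℝ => C * N * (1 + r ^ (1 / 2 : ℝ))) (𝓝[>] 0) (𝓝 (C * N)) := by
    have h := ((Real.continuousAt_rpow_const 0 (1 / 2) (.inr (by norm_num))).const_add 1).const_mul
      (C * N : ℝ)
    simpa using h.tendsto.mono_left nhdsWithin_le_nhds
  have h : ‖u p‖ ≤ C * N := le_of_tendsto_of_tendsto hlim hlimit <| by
    filter_upwards [Ioc_mem_nhdsGT zero_lt_one] with r hr using hbound r hr
  calc ‖u p‖ₑ ≤ (C * N : ℝ≥0) := by exact_mod_cast h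
    _ ≤ (C + 1 : ℝ≥0) * N := by exact_mod_cast mul_le_mul' (le_self_add : C ≤ C + 1) le_rfl

end Sobolev

open scoped Manifold in
theorem exists_contDiff_eventuallyEq {V F : Type*} [NormedAddCommGroup V] [NormedSpace ℝ V]
    [FiniteDimensional ℝ V] [NormedAddCommGroup F] [NormedSpace ℝ F] {L D : Set V}
    (hL : IsClosed L) (hD : IsOpen D) (hLD : L ⊆ D) {u : V → F}
    (hu : ∀ x ∈ D, ContDiffAt ℝ ∞ u x) :
    ∃ v : V → F, ContDiff ℝ ∞ v ∧ ∀ x ∈ L, v =ᶠ[𝓝 x] u := by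
  obtain ⟨χ, hχ0, hχ1, -⟩ := exists_contMDiffMap_zero_one_nhds_of_isClosed (n := ⊤) 𝓘(ℝ, V)
    hD.isClosed_compl hL (Set.disjoint_compl_left_iff_subset.2 hLD)
  refine ⟨fun x => χ x • u x, contDiff_iff_contDiffAt.2 fun x => ?_, fun x hx => ?_⟩
  · by_cases hx : x ∈ D
    · exact χ.contMDiff.contDiff.contDiffAt.smul (hu x hx)
    · refine (contDiffAt_const (c := 0)).congr_of_eventuallyEq ?_
      filter_upwards [hχ0.filter_mono (nhds_le_nhdsSet (show x ∈ Dᶜ from hx))] with y hy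
      rw [hy, zero_smul]
  · filter_upwards [hχ1.filter_mono (nhds_le_nhdsSet hx)] with y hy
    rw [hy, one_smul]

section SobolevLocal

variable {n s : ℕ} {D K : Set (Heis n)} [CompleteSpace E]

theorem exists_enorm_le_eSobolevNorm (hn : 1 ≤ n) (hK : IsCompact K) (hD : IsOpen D)
    (hKD : K ⊆ D) :
    ∃ C : ℝ≥0, ∀ u : Heis n → E, (∀ x ∈ D, ContDiffAt ℝ ∞ u x) → ∀ p ∈ K,
      ‖u p‖ₑ ≤ C * eSobolevNorm n (n + 2) u 2 (volume.restrict D) := by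
  obtain ⟨L, hL, hKL, hLD⟩ := exists_compact_between hK hD hKD
  obtain ⟨C, hC⟩ := exists_enorm_le_eSobolevNorm_of_contDiff (E := E) hn hK isOpen_interior hKL
  refine ⟨C, fun u hu p hp => ?_⟩
  obtain ⟨v, hv, hvu⟩ := exists_contDiff_eventuallyEq hL.isClosed hD hLD hu
  calc ‖u p‖ₑ = ‖v p‖ₑ := by rw [(hvu p (interior_subset (hKL hp))).self_of_nhds]
    _ ≤ C * eSobolevNorm n (n + 2) v 2 (volume.restrict (interior L)) := hC v hv p hp
    _ = C * eSobolevNorm n (n + 2) u 2 (volume.restrict (interior L)) := by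
        rw [eSobolevNorm_congr isOpen_interior.measurableSet fun x hx => hvu x (interior_subset hx)]
    _ ≤ _ := by
        gcongr
        exact eSobolevNorm_mono_measure (Measure.restrict_mono (interior_subset.trans hLD) le_rfl)

/-- An `L^∞` bound costs `n + 2` derivatives, and `m + n + 2 ≤ s` whenever `2 m ≤ s`. -/
theorem exists_eMoserNorm_le_eSobolevNorm (hn : 1 ≤ n) (hs : 2 * n + 3 ≤ s) (hK : IsCompact K)
    (hD : IsOpen D) (hKD : K ⊆ D) :
    ∃ C : ℝ≥0, ∀ u : Heis n → E, (∀ x ∈ D, ContDiffAt ℝ ∞ u x) →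
      eMoserNorm n s s u (volume.restrict K) ≤ C * eSobolevNorm n s u 2 (volume.restrict D) := by
  obtain ⟨C, hC⟩ := exists_enorm_le_eSobolevNorm (E := E) hn hK hD hKD
  refine ⟨C + 1, fun u hu => eMoserNorm_le_iff.2 fun I p hI hp => ?_⟩
  rw [ENNReal.coe_add, add_mul, ENNReal.coe_one, one_mul]
  rcases hp with ⟨rfl, -⟩ | ⟨rfl, hIs⟩
  · calc eLpNorm (XI n I u) 2 (volume.restrict K)
        ≤ eLpNorm (XI n I u) 2 (volume.restrict D) :=
          eLpNorm_mono_measure _ (Measure.restrict_mono hKD le_rfl)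
      _ ≤ eSobolevNorm n s u 2 (volume.restrict D) := eLpNorm_XI_le_eSobolevNorm hI
      _ ≤ _ := le_add_self
  · rw [eLpNorm_exponent_top]
    refine (eLpNormEssSup_le_of_ae_enorm_bound ?_).trans le_self_add
    filter_upwards [ae_restrict_mem hK.measurableSet] with x hx
    refine (hC _ (fun y hy => contDiffAt_XI (hu y hy) I) x hx).trans ?_
    gcongr
    exact eSobolevNorm_XI_le I (by omega)

end SobolevLocal

/-! ### Comparison with the Folland–Stein norm -/

section Boundary

variable {n k : ℕ} {D : Set (Heis n)} {f : Heis n → E}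

/-- Functions on `D` which near each point of `closure D` agree with a `C^k` function on
`closure D`. The notion is needed because `hDeriv` is a full Fréchet derivative, which only sees
`f` on the closed set `closure D` at interior points. -/
def ContDiffUpToBoundary (n k : ℕ) (D : Set (Heis n)) (f : Heis n → E) : Prop :=
  ∀ x ∈ closure D, ∃ g : Heis n → E, ContDiffWithinAt ℝ k g (closure D) x ∧ f =ᶠ[𝓝[D] x] g

theorem ContDiffUpToBoundary.hDeriv (hD : IsOpen D) (hf : ContDiffUpToBoundary n (k + 1) D f)
    (j : Fin (2 * n)) : ContDiffUpToBoundary n k D (hDeriv n j f) := by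
  intro x hx
  obtain ⟨g, hg, hfg⟩ := hf x hx
  obtain ⟨U, hU, -, g', hg', hg'c⟩ :=
    (contDiffWithinAt_succ_iff_hasFDerivWithinAt (n := k) (by simp)).1 (mod_cast hg)
  rw [Set.insert_eq_of_mem hx] at hU
  refine ⟨fun y => g' y (Xvec n j y), ContDiffWithinAt.clm_apply
    (hg'c.mono_of_mem_nhdsWithin hU)
    ((contDiff_Xvec j).of_le (mod_cast le_top)).contDiffWithinAt, ?_⟩
  filter_upwards [eventually_eventually_nhdsWithin.2 hfg, eventually_eventually_nhdsWithin.2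
    (nhdsWithin_mono x subset_closure hU : ∀ᶠ y in 𝓝[D] x, y ∈ U), self_mem_nhdsWithin]
    with y hfgy hUy hy
  rw [hD.nhdsWithin_eq hy] at hfgy hUy
  have hgy : HasFDerivAt g (g' y) y := (hg' y hUy.self_of_nhds).hasFDerivAt hUy
  rw [_root_.hDeriv, EventuallyEq.fderiv_eq hfgy, hgy.fderiv]

theorem contDiffUpToBoundary_XI (hD : IsOpen D) (hf : ContDiffOn ℝ ∞ f (closure D)) :
    ∀ (I : List (Fin (2 * n))) (k : ℕ), ContDiffUpToBoundary n k D (XI n I f)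
  | [], _ => fun x hx => ⟨f, (hf x hx).of_le (mod_cast le_top), EventuallyEq.rfl⟩
  | j :: I, k => (contDiffUpToBoundary_XI hD hf I (k + 1)).hDeriv hD j

theorem ContDiffUpToBoundary.exists_norm_le (hDb : IsBounded D)
    (hf : ContDiffUpToBoundary n k D f) : ∃ M, ∀ x ∈ D, ‖f x‖ ≤ M := by
  have hlim : ∀ x ∈ closure D, ∃ y, Tendsto f (𝓝[D] x) (𝓝 y) ∧ (x ∈ D → f x = y) :=
    fun x hx => by
      obtain ⟨g, hg, hfg⟩ := hf x hx
      exact ⟨g x, (hg.continuousWithinAt.mono subset_closure).tendsto.congr' hfg.symm,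
        fun hxD => hfg.self_of_nhdsWithin hxD⟩
  obtain ⟨M, hM⟩ := hDb.isCompact_closure.exists_bound_of_continuousOn
    (continuousOn_extendFrom subset_rfl fun x hx => (hlim x hx).imp fun _ h => h.1)
  refine ⟨M, fun x hx => ?_⟩
  obtain ⟨y, hy, hxy⟩ := hlim x (subset_closure hx)
  rw [hxy hx, ← extendFrom_eq (subset_closure hx) hy]
  exact hM x (subset_closure hx)

theorem memLp_XI (hD : IsOpen D) (hDb : IsBounded D) (hf : ContDiffOn ℝ ∞ f (closure D))
    (I : List (Fin (2 * n))) (p : ℝ≥0∞) : MemLp (XI n I f) p (volume.restrict D) := by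
  obtain ⟨M, hM⟩ := (contDiffUpToBoundary_XI hD hf I 0).exists_norm_le hDb
  have : IsFiniteMeasure (volume.restrict D) := isFiniteMeasure_restrict.2 hDb.measure_lt_top.ne
  have hfD : ∀ x ∈ D, ContDiffAt ℝ ∞ (XI n I f) x := fun x hx =>
    contDiffAt_XI ((hf.mono subset_closure).contDiffAt (hD.mem_nhds hx)) I
  exact .of_bound (aestronglyMeasurable_of_contDiffAt hD.measurableSet hfD) M
    ((ae_restrict_mem hD.measurableSet).mono hM)

end Boundary

section FollandStein

variable {n s : ℕ} {D : Set (Heis n)} {f : Heis n → E}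

theorem integral_norm_sq_le_fsNormSq {I : List (Fin (2 * n))} (hI : I.length ≤ s) :
    ∫ x in D, ‖XI n I f x‖ ^ 2 ≤ fsNormSq n D s f := by
  have hnonneg : ∀ t (J : Fin t → Fin (2 * n)), 0 ≤ ∫ x in D, ‖XI n (List.ofFn J) f x‖ ^ 2 :=
    fun _ _ => integral_nonneg fun _ => by positivity
  calc ∫ x in D, ‖XI n I f x‖ ^ 2 = ∫ x in D, ‖XI n (List.ofFn I.get) f x‖ ^ 2 := by
        rw [List.ofFn_get]
    _ ≤ ∑ J : Fin I.length → Fin (2 * n), ∫ x in D, ‖XI n (List.ofFn J) f x‖ ^ 2 :=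
        Finset.single_le_sum (f := fun J : Fin I.length → Fin (2 * n) =>
          ∫ x in D, ‖XI n (List.ofFn J) f x‖ ^ 2) (fun J _ => hnonneg _ J) (Finset.mem_univ _)
    _ ≤ fsNormSq n D s f :=
        Finset.single_le_sum (f := fun t => ∑ J : Fin t → Fin (2 * n),
            ∫ x in D, ‖XI n (List.ofFn J) f x‖ ^ 2)
          (fun t _ => Finset.sum_nonneg fun J _ => hnonneg t J)
          (Finset.mem_range.2 (Nat.lt_succ_of_le hI))

theorem eSobolevNorm_le_ofReal_fsNorm (hf : ∀ I : List (Fin (2 * n)), I.length ≤ s →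
      MemLp (XI n I f) 2 (volume.restrict D)) :
    eSobolevNorm n s f 2 (volume.restrict D) ≤ ENNReal.ofReal (fsNorm n D s f) := by
  refine eSobolevNorm_le_iff.2 fun I hI => ?_
  rw [(hf I hI).eLpNorm_eq_integral_rpow_norm (by simp) (by simp)]
  simp only [ENNReal.toReal_ofNat, Real.rpow_two, ← one_div, ← Real.sqrt_eq_rpow]
  exact ENNReal.ofReal_le_ofReal (Real.sqrt_le_sqrt (integral_norm_sq_le_fsNormSq hI))

theorem integral_norm_sq_le_of_eLpNorm_le {X F : Type*} [MeasurableSpace X] {μ : Measure X}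
    [NormedAddCommGroup F] {g : X → F} {N : ℝ≥0} (hg : eLpNorm g 2 μ ≤ N) :
    ∫ x, ‖g x‖ ^ 2 ∂μ ≤ N ^ 2 := by
  have h : ‖∫ x, ‖g x‖ ^ 2 ∂μ‖ₑ ≤ ‖(N : ℝ) ^ 2‖ₑ :=
    calc ‖∫ x, ‖g x‖ ^ 2 ∂μ‖ₑ ≤ ∫⁻ x, ‖‖g x‖ ^ 2‖ₑ ∂μ := enorm_integral_le_lintegral_enorm _
      _ = eLpNorm g 2 μ ^ 2 := by
          simpa [enorm_pow] using (eLpNorm_nnreal_pow_eq_lintegral (f := g) (μ := μ)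
            (p := 2) two_ne_zero).symm
      _ ≤ N ^ 2 := pow_le_pow_left' hg 2
      _ = ‖(N : ℝ) ^ 2‖ₑ := by simp [enorm_pow]
  simpa using (le_abs_self _).trans (enorm_le_iff_norm_le.1 h)

theorem fsNorm_le_of_eSobolevNorm_le {N : ℝ≥0}
    (hN : eSobolevNorm n s f 2 (volume.restrict D) ≤ N) :
    fsNorm n D s f ≤ √(∑ t ∈ Finset.range (s + 1), (2 * n : ℝ) ^ t) * N := by
  have hint : ∀ t ∈ Finset.range (s + 1), ∀ I : Fin t → Fin (2 * n),
      ∫ x in D, ‖XI n (List.ofFn I) f x‖ ^ 2 ≤ N ^ 2 := fun t ht I =>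
    integral_norm_sq_le_of_eLpNorm_le <|
      (eLpNorm_XI_le_eSobolevNorm (by simpa [Nat.lt_succ_iff] using ht)).trans hN
  rw [fsNorm, ← Real.sqrt_sq N.coe_nonneg, ← Real.sqrt_mul (by positivity)]
  refine Real.sqrt_le_sqrt ?_
  rw [fsNormSq, Finset.sum_mul]
  refine Finset.sum_le_sum fun t ht => ?_
  simpa using Finset.sum_le_card_nsmul Finset.univ _ _ fun I _ => hint t ht I

end FollandStein

/-! ### The main estimate -/

section Main

variable {n s : ℕ} {D D' K : Set (Heis n)}

theorem XI_neg (f : Heis n → E) : ∀ I : List (Fin (2 * n)), XI n I (-f) = -XI n I f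
  | [] => rfl
  | j :: I => by
    rw [XI, XI_neg f I]
    ext x
    simp [XI, hDeriv, fderiv_neg]

theorem fsNorm_nonneg (f : Heis n → E) : 0 ≤ fsNorm n D s f :=
  Real.sqrt_nonneg _

theorem fsNorm_neg (f : Heis n → E) : fsNorm n D s (-f) = fsNorm n D s f := by
  simp [fsNorm, fsNormSq, XI_neg]

theorem exists_eMoserNorm_le_fsNorm [CompleteSpace E] (hn : 1 ≤ n) (hs : 2 * n + 3 ≤ s)
    (hK : IsCompact K) (hD : IsOpen D) (hDb : IsBounded D) (hKD : K ⊆ D) :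
    ∃ C : ℝ≥0, ∀ f : Heis n → E, ContDiffOn ℝ ∞ f (closure D) →
      eMoserNorm n s s f (volume.restrict K) ≤ C * ENNReal.ofReal (fsNorm n D s f) := by
  obtain ⟨C, hC⟩ := exists_eMoserNorm_le_eSobolevNorm (E := E) hn hs hK hD hKD
  refine ⟨C, fun f hf => (hC f fun x hx =>
    (hf.mono subset_closure).contDiffAt (hD.mem_nhds hx)).trans ?_⟩
  gcongr
  exact eSobolevNorm_le_ofReal_fsNorm fun I _ => memLp_XI hD hDb hf I 2

variable {𝕜 : Type*} [NormedField 𝕜] [NormedAlgebra ℝ 𝕜]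

theorem exists_eMoserNorm_inv_le_fsNorm [CompleteSpace 𝕜] (hn : 1 ≤ n) (hs : 2 * n + 3 ≤ s)
    (hK : IsCompact K) (hD : IsOpen D) (hDb : IsBounded D) (hKD : K ⊆ D) (c : ℝ≥0) :
    ∃ C : ℝ≥0, ∀ f : Heis n → 𝕜, ContDiffOn ℝ ∞ f (closure D) → (∀ x ∈ K, f x ≠ 0) →
      (∀ x ∈ K, ‖(f x)⁻¹‖ₑ ≤ c) →
      eMoserNorm n s s f⁻¹ (volume.restrict K) ≤
        C * (1 + ENNReal.ofReal (fsNorm n D s f)) ^ s := by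
  obtain ⟨A, hA⟩ := exists_eMoserNorm_le_fsNorm (E := 𝕜) hn hs hK hD hDb hKD
  refine ⟨(1 + c * 2 ^ s * A) ^ s * (c * (1 + (volume K).toNNReal)), fun f hf hf0 hfc => ?_⟩
  set N := ENNReal.ofReal (fsNorm n D s f)
  have hone : 1 + c * 2 ^ s * (A * N) ≤ (1 + c * 2 ^ s * A) * (1 + N) := by
    calc 1 + c * 2 ^ s * (A * N) = 1 + c * 2 ^ s * A * N := by rw [mul_assoc _ _ N]
      _ ≤ 1 + c * 2 ^ s * A * N + (c * 2 ^ s * A + N) := le_self_add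
      _ = _ := by ring
  calc eMoserNorm n s s f⁻¹ (volume.restrict K)
      ≤ (1 + c * 2 ^ s * eMoserNorm n s s f (volume.restrict K)) ^ s * (c * (1 + volume K)) :=
        eMoserNorm_inv_le hK.measurableSet (fun x hx => (hf.mono subset_closure).contDiffAt
          (hD.mem_nhds (hKD hx))) hf0 hfc le_rfl
    _ ≤ ((1 + c * 2 ^ s * A) * (1 + N)) ^ s * (c * (1 + volume K)) := by
        gcongr
        exact le_trans (by gcongr; exact hA f hf) hone
    _ = _ := by
        push_cast [ENNReal.coe_toNNReal hK.measure_lt_top.ne]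
        rw [mul_pow]
        ring

theorem eSobolevNorm_inv_sub_inv_le {u v : Heis n → 𝕜} (hK : MeasurableSet K)
    (hu : ∀ x ∈ K, ContDiffAt ℝ ∞ u x) (hv : ∀ x ∈ K, ContDiffAt ℝ ∞ v x)
    (hu0 : ∀ x ∈ K, u x ≠ 0) (hv0 : ∀ x ∈ K, v x ≠ 0) :
    eSobolevNorm n s (u⁻¹ - v⁻¹) 2 (volume.restrict K) ≤ 4 ^ s *
      (eMoserNorm n s s u⁻¹ (volume.restrict K) * eMoserNorm n s s (v - u) (volume.restrict K) *
        eMoserNorm n s s v⁻¹ (volume.restrict K)) := by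
  have hfactor : ∀ x ∈ K, u⁻¹ - v⁻¹ =ᶠ[𝓝 x] u⁻¹ * (v - u) * v⁻¹ := fun x hx => by
    filter_upwards [(hu x hx).continuousAt.eventually_ne (hu0 x hx),
      (hv x hx).continuousAt.eventually_ne (hv0 x hx)] with y huy hvy
    exact inv_sub_inv' huy hvy
  have huinv : ∀ x ∈ K, ContDiffAt ℝ ∞ u⁻¹ x := fun x hx => (hu x hx).inv (hu0 x hx)
  have hvinv : ∀ x ∈ K, ContDiffAt ℝ ∞ v⁻¹ x := fun x hx => (hv x hx).inv (hv0 x hx)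
  have hvu : ∀ x ∈ K, ContDiffAt ℝ ∞ (v - u) x := fun x hx => (hv x hx).sub (hu x hx)
  set N : (Heis n → 𝕜) → ℝ≥0∞ := fun f => eMoserNorm n s s f (volume.restrict K)
  calc eSobolevNorm n s (u⁻¹ - v⁻¹) 2 (volume.restrict K)
      = eSobolevNorm n s (u⁻¹ * (v - u) * v⁻¹) 2 (volume.restrict K) :=
        eSobolevNorm_congr hK hfactor
    _ ≤ N (u⁻¹ * (v - u) * v⁻¹) := eSobolevNorm_two_le_eMoserNorm
    _ ≤ 2 ^ s * (N (u⁻¹ * (v - u)) * N v⁻¹) :=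
        eMoserNorm_mul_le hK (fun x hx => (huinv x hx).mul (hvu x hx)) hvinv
    _ ≤ 2 ^ s * (2 ^ s * (N u⁻¹ * N (v - u)) * N v⁻¹) := by
        gcongr
        exact eMoserNorm_mul_le hK huinv hvu
    _ = 4 ^ s * (N u⁻¹ * N (v - u) * N v⁻¹) := by
        rw [show (4 : ℝ≥0∞) = 2 * 2 by norm_num, mul_pow]
        ring

theorem exists_eSobolevNorm_inv_sub_inv_le_fsNorm [CompleteSpace 𝕜] (hn : 1 ≤ n)
    (hs : 2 * n + 3 ≤ s) (hK : IsCompact K) (hD : IsOpen D) (hDb : IsBounded D) (hKD : K ⊆ D)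
    (c : ℝ≥0) :
    ∃ C : ℝ≥0, ∀ f g : Heis n → 𝕜,
      ContDiffOn ℝ ∞ f (closure D) → ContDiffOn ℝ ∞ g (closure D) →
      (∀ x ∈ K, f x ≠ 0 ∧ ‖(f x)⁻¹‖ₑ ≤ c) → (∀ x ∈ K, g x ≠ 0 ∧ ‖(g x)⁻¹‖ₑ ≤ c) →
      eSobolevNorm n s (f⁻¹ - g⁻¹) 2 (volume.restrict K) ≤
        C * (1 + ENNReal.ofReal (fsNorm n D s f)) ^ s * (1 + ENNReal.ofReal (fsNorm n D s g)) ^ s *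
          ENNReal.ofReal (fsNorm n D s (f - g)) := by
  obtain ⟨A, hA⟩ := exists_eMoserNorm_le_fsNorm (E := 𝕜) hn hs hK hD hDb hKD
  obtain ⟨B, hB⟩ := exists_eMoserNorm_inv_le_fsNorm (𝕜 := 𝕜) hn hs hK hD hDb hKD c
  refine ⟨4 ^ s * (B * A * B), fun f g hf hg hfK hgK => ?_⟩
  have hfD : ∀ x ∈ K, ContDiffAt ℝ ∞ f x := fun x hx =>
    (hf.mono subset_closure).contDiffAt (hD.mem_nhds (hKD hx))
  have hgD : ∀ x ∈ K, ContDiffAt ℝ ∞ g x := fun x hx =>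
    (hg.mono subset_closure).contDiffAt (hD.mem_nhds (hKD hx))
  refine (eSobolevNorm_inv_sub_inv_le hK.measurableSet hfD hgD (fun x hx => (hfK x hx).1)
    fun x hx => (hgK x hx).1).trans ?_
  grw [hB f hf (fun x hx => (hfK x hx).1) fun x hx => (hfK x hx).2,
    hB g hg (fun x hx => (hgK x hx).1) fun x hx => (hgK x hx).2, hA (g - f) (hg.sub hf),
    ← neg_sub f g, fsNorm_neg]
  push_cast
  exact le_of_eq (by ring)

theorem ne_zero_and_enorm_inv_le {F : Type*} [NormedDivisionRing F] {C₀ : ℝ} (hC₀ : 0 < C₀)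
    {a : F} (ha : 1 / C₀ ≤ ‖a‖) :
    a ≠ 0 ∧ ‖a⁻¹‖ₑ ≤ C₀.toNNReal := by
  have hpos : 0 < ‖a‖ := (one_div_pos.2 hC₀).trans_le ha
  refine ⟨norm_pos_iff.1 hpos, ?_⟩
  rw [← ofReal_norm, norm_inv]
  exact ENNReal.ofReal_le_ofReal (inv_le_of_inv_le₀ hC₀ (by rwa [← one_div]))

theorem statement5_general [CompleteSpace 𝕜] (hn : 1 ≤ n) (hs : 2 * n + 3 ≤ s) (hD : IsOpen D)
    (hDb : IsBounded D) (hsub : closure D' ⊆ D) {C₀ : ℝ} (hC₀ : 0 < C₀) :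
    ∃ C > (0 : ℝ), ∀ f f' : Heis n → 𝕜,
      ContDiffOn ℝ ∞ f (closure D) → ContDiffOn ℝ ∞ f' (closure D) →
      (∀ x ∈ closure D', 1 / C₀ ≤ ‖f x‖) → (∀ x ∈ closure D', 1 / C₀ ≤ ‖f' x‖) →
      fsNorm n D' s (fun x => (f x)⁻¹ - (f' x)⁻¹) ≤
        C * (1 + fsNorm n D s f) ^ s * (1 + fsNorm n D s f') ^ s *
          fsNorm n D s (fun x => f x - f' x) := by
  have hK : IsCompact (closure D') := Metric.isCompact_of_isClosed_isBounded isClosed_closure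
    (hDb.subset hsub)
  obtain ⟨C, hC⟩ := exists_eSobolevNorm_inv_sub_inv_le_fsNorm (𝕜 := 𝕜) hn hs hK hD hDb hsub
    C₀.toNNReal
  set S := √(∑ t ∈ Finset.range (s + 1), (2 * n : ℝ) ^ t)
  refine ⟨S * C + 1, by positivity, fun f f' hf hf' hfC hf'C => ?_⟩
  have hsobolev : eSobolevNorm n s (f⁻¹ - f'⁻¹) 2 (volume.restrict D') ≤
      (C * (1 + (fsNorm n D s f).toNNReal) ^ s * (1 + (fsNorm n D s f').toNNReal) ^ s *
        (fsNorm n D s (f - f')).toNNReal : ℝ≥0) := by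
    push_cast
    exact (eSobolevNorm_mono_measure (Measure.restrict_mono subset_closure le_rfl)).trans <|
      hC f f' hf hf' (fun x hx => ne_zero_and_enorm_inv_le hC₀ (hfC x hx))
        fun x hx => ne_zero_and_enorm_inv_le hC₀ (hf'C x hx)
  have hf0 := fsNorm_nonneg (D := D) (s := s) f
  have hf'0 := fsNorm_nonneg (D := D) (s := s) f'
  have hff'0 := fsNorm_nonneg (D := D) (s := s) (f - f')
  calc fsNorm n D' s (f⁻¹ - f'⁻¹)
      ≤ S * (C * (1 + fsNorm n D s f) ^ s * (1 + fsNorm n D s f') ^ s *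
          fsNorm n D s (f - f')) := by
        simpa [hf0, hf'0, hff'0] using fsNorm_le_of_eSobolevNorm_le hsobolev
    _ = S * C * (1 + fsNorm n D s f) ^ s * (1 + fsNorm n D s f') ^ s *
          fsNorm n D s (f - f') := by ring
    _ ≤ (S * C + 1) * (1 + fsNorm n D s f) ^ s * (1 + fsNorm n D s f') ^ s *
          fsNorm n D s (f - f') := by
        gcongr
        exact (lt_add_one _).le

end Main

/-- `‖1/f − 1/f′‖_{D′,s} ≤ C (1+‖f‖_{D,s})^s (1+‖f′‖_{D,s})^s ‖f−f′‖_{D,s}`. -/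
theorem statement5 (n s : ℕ) (hn : 1 ≤ n) (hs : 2*n+3 ≤ s)
    (D D' : Set (Fin (2*n+1) → ℝ)) (hD : IsOpen D) (hDb : IsBounded D)
    (hD' : IsOpen D') (hD'b : IsBounded D') (hsub : closure D' ⊆ D)
    (C₀ : ℝ) (hC₀ : 0 < C₀) :
    ∃ C > (0:ℝ), ∀ f f' : (Fin (2*n+1) → ℝ) → ℝ,
      ContDiffOn ℝ (⊤:ℕ∞) f (closure D) → ContDiffOn ℝ (⊤:ℕ∞) f' (closure D) →
      (∀ x ∈ closure D', 1/C₀ ≤ f x) → (∀ x ∈ closure D', 1/C₀ ≤ f' x) →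
      fsNorm n D' s (fun x => (f x)⁻¹ - (f' x)⁻¹) ≤
        C * (1 + fsNorm n D s f)^s * (1 + fsNorm n D s f')^s *
          fsNorm n D s (fun x => f x - f' x) := by
  obtain ⟨C, hC, h⟩ := statement5_general (𝕜 := ℝ) hn hs hD hDb hsub hC₀
  exact ⟨C, hC, fun f f' hf hf' hfC hf'C => h f f' hf hf'
    (fun x hx => (hfC x hx).trans (le_abs_self _)) fun x hx => (hf'C x hx).trans (le_abs_self _)⟩

end
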